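/- arXiv:2501.16647 — 2 statements merged into one kernel-verified Lean document; each statement's English description precedes it below -/
import Mathlib

section
/- There are continuous functions f, F : 𝓜 → (0, ∞) (with respect to the H^s topology on the open set 𝓜 ⊂ H^s(𝕋,ℝⁿ)) such that for every γ ∈ 𝓜 and every u ∈ H^s(𝕋,ℝⁿ) one has f(γ)·‖u‖_{H^s} ≤ ‖u‖_{H^s(γ)} ≤ F(γ)·‖u‖_{H^s}. In particular, for each γ ∈ 𝓜 the γ-dependent norm ‖·‖_{H^s(γ)} is equivalent to ‖·‖_{H^s}. -/
open MeasureTheory Real Filter Set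
open scoped ENNReal Topology RealInnerProductSpace

noncomputable section

/-- Euclidean space `ℝⁿ`. -/
abbrev En (n : ℕ) : Type := EuclideanSpace ℝ (Fin n)

/-- A fundamental domain for the circle `𝕋 = ℝ/ℤ`. -/
def I01 : Set ℝ := Set.Ico (0 : ℝ) 1

/-- The intrinsic distance on `𝕋 = ℝ/ℤ`, expressed for real representatives. -/
def dT (x y : ℝ) : ℝ := ⨅ k : ℤ, |x - y - (k : ℝ)|

/-- Supremum norm of a (periodic) function on the circle. -/
def supNorm {E : Type*} [NormedAddCommGroup E] (f : ℝ → E) : ℝ := ⨆ x : ℝ, ‖f x‖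

/-- The squared Gagliardo seminorm `[v]_{H^σ}²` of a function on the circle, valued in `[0,∞]`. -/
def gagliardoSqE {E : Type*} [NormedAddCommGroup E] (σ : ℝ) (v : ℝ → E) : ℝ≥0∞ :=
  ∫⁻ x in I01, ∫⁻ y in I01, ENNReal.ofReal (‖v y - v x‖ ^ 2 / dT x y ^ (2 * σ + 1))

/-- Membership in the Sobolev–Slobodeckij space `H^s(𝕋, ℝⁿ)`; for `s ∈ (3/2,2)` such
functions have a `C¹` representative, which we take as the defining data. -/
def InHs {n : ℕ} (s : ℝ) (u : ℝ → En n) : Prop :=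
  Function.Periodic u 1 ∧ ContDiff ℝ 1 u ∧ gagliardoSqE (s - 1) (deriv u) < ⊤

/-- The squared `H^s` norm `‖u‖²_{L²} + ‖u'‖²_{L²} + [u']²_{H^{s-1}}`. -/
def HsNormSq {n : ℕ} (s : ℝ) (u : ℝ → En n) : ℝ :=
  (∫ x in I01, ‖u x‖ ^ 2) + (∫ x in I01, ‖deriv u x‖ ^ 2) +
    (gagliardoSqE (s - 1) (deriv u)).toReal

/-- The `H^s` norm. -/
def HsNorm {n : ℕ} (s : ℝ) (u : ℝ → En n) : ℝ := Real.sqrt (HsNormSq s u)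

/-- The `H^s` inner product. -/
def HsInner {n : ℕ} (s : ℝ) (u v : ℝ → En n) : ℝ :=
  (∫ x in I01, ⟪u x, v x⟫) + (∫ x in I01, ⟪deriv u x, deriv v x⟫) +
    ∫ x in I01, ∫ y in I01,
      ⟪deriv u y - deriv u x, deriv v y - deriv v x⟫ / dT x y ^ (2 * (s - 1) + 1)

/-- The manifold `𝓜` of embedded closed curves of class `H^s`: injective (on the circle)
immersions. -/
def InM {n : ℕ} (s : ℝ) (γ : ℝ → En n) : Prop :=
  InHs s γ ∧ Set.InjOn γ I01 ∧ ∀ x, deriv γ x ≠ 0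

/-- The length `L(γ)`. -/
def arcLen {n : ℕ} (γ : ℝ → En n) : ℝ := ∫ x in I01, ‖deriv γ x‖

/-- The arc-length distance `d_γ(x,y)`: the length of the shorter of the two arcs of `γ`
between `x` and `y`. -/
def arcDist {n : ℕ} (γ : ℝ → En n) (x y : ℝ) : ℝ :=
  ⨅ k : ℤ, |∫ t in x..(y + (k : ℝ)), ‖deriv γ t‖|

/-- Derivative with respect to arc length, `D_γ u = u' / |γ'|`. -/
def Dg {n : ℕ} (γ u : ℝ → En n) (x : ℝ) : En n := ‖deriv γ x‖⁻¹ • deriv u x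

/-- `𝒟_γ u (x)`, the pointwise linear map `w ↦ |γ'(x)|⁻² ⟪γ'(x), w⟫ u'(x)`. -/
def DDg {n : ℕ} (γ u : ℝ → En n) (x : ℝ) (w : En n) : En n :=
  ((‖deriv γ x‖ ^ 2)⁻¹ * ⟪deriv γ x, w⟫) • deriv u x

/-- The operator `R^s_γ`. -/
def Rop {n : ℕ} (s : ℝ) (γ u : ℝ → En n) (x y : ℝ) : En n :=
  (‖γ y - γ x‖ ^ s)⁻¹ • (u y - u x - DDg γ u x (γ y - γ x))

/-- Density of the measure `μ_γ` with respect to `λ ⊗ λ` on `𝕋 × 𝕋`. -/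
def muW {n : ℕ} (γ : ℝ → En n) (x y : ℝ) : ℝ :=
  ‖deriv γ x‖ * ‖deriv γ y‖ / ‖γ y - γ x‖

/-- Density of the measure `ν_γ` with respect to `λ ⊗ λ` on `𝕋 × 𝕋`. -/
def nuW {n : ℕ} (γ : ℝ → En n) (x y : ℝ) : ℝ :=
  ‖deriv γ x‖ * ‖deriv γ y‖ / arcDist γ x y

/-- The tangent-point energy, valued in `[0,∞]`. -/
def EtpE {n : ℕ} (s : ℝ) (γ : ℝ → En n) : ℝ≥0∞ :=
  ∫⁻ x in I01, ∫⁻ y in I01, ENNReal.ofReal (‖Rop s γ γ x y‖ ^ 2 * muW γ x y)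

/-- The tangent-point energy, real-valued (finite on `𝓜`). -/
def Etp {n : ℕ} (s : ℝ) (γ : ℝ → En n) : ℝ := (EtpE s γ).toReal

/-- `‖R^s_γ u‖²_{L²(ν_γ)}`, valued in `[0,∞]`. -/
def RnuSqE {n : ℕ} (s : ℝ) (γ u : ℝ → En n) : ℝ≥0∞ :=
  ∫⁻ x in I01, ∫⁻ y in I01, ENNReal.ofReal (‖Rop s γ u x y‖ ^ 2 * nuW γ x y)

/-- `‖R^s_γ u‖²_{L²(ν_γ)}`, real-valued. -/
def RnuSq {n : ℕ} (s : ℝ) (γ u : ℝ → En n) : ℝ := (RnuSqE s γ u).toReal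

/-- The squared `γ`-dependent seminorm `[u]²_{H^s(γ)}`, valued in `[0,∞]`. -/
def gagGammaSqE {n : ℕ} (s : ℝ) (γ u : ℝ → En n) : ℝ≥0∞ :=
  ∫⁻ x in I01, ∫⁻ y in I01,
    ENNReal.ofReal (‖Dg γ u y - Dg γ u x‖ ^ 2 / arcDist γ x y ^ (2 * (s - 1)) * nuW γ x y)

/-- The squared `γ`-dependent seminorm `[u]²_{H^s(γ)}`, real-valued. -/
def gagGammaSq {n : ℕ} (s : ℝ) (γ u : ℝ → En n) : ℝ := (gagGammaSqE s γ u).toReal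

/-- The inner product `⟨u,v⟩_{L²(γ)}`. -/
def innerL2g {n : ℕ} (γ u v : ℝ → En n) : ℝ := ∫ x in I01, ⟪u x, v x⟫ * ‖deriv γ x‖

/-- The inner product `⟨u,v⟩_{H¹(γ)}`. -/
def innerH1g {n : ℕ} (γ u v : ℝ → En n) : ℝ :=
  ∫ x in I01, ⟪Dg γ u x, Dg γ v x⟫ * ‖deriv γ x‖

/-- The squared `γ`-dependent norm `‖u‖²_{H^s(γ)}`. -/
def HsGammaNormSq {n : ℕ} (s : ℝ) (γ u : ℝ → En n) : ℝ :=
  innerL2g γ u u + innerH1g γ u u + gagGammaSq s γ u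

/-- The `γ`-dependent norm `‖u‖_{H^s(γ)}`. -/
def HsGammaNorm {n : ℕ} (s : ℝ) (γ u : ℝ → En n) : ℝ := Real.sqrt (HsGammaNormSq s γ u)

/-- The bilinear form `B¹_γ`. -/
def B1 {n : ℕ} (s : ℝ) (γ u v : ℝ → En n) : ℝ :=
  ∫ x in I01, ∫ y in I01, ⟪Rop s γ u x y, Rop s γ v x y⟫ * muW γ x y

/-- The bilinear form `B²_γ`. -/
def B2 {n : ℕ} (s : ℝ) (γ u v : ℝ → En n) : ℝ :=
  ∫ x in I01, ∫ y in I01,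
    ‖Rop s γ γ x y‖ ^ 2 * (⟪u y - u x, v y - v x⟫ / ‖γ y - γ x‖ ^ 2) * muW γ x y

/-- The bilinear form `B³_γ`. -/
def B3 {n : ℕ} (s : ℝ) (γ u v : ℝ → En n) : ℝ :=
  ∫ x in I01, ∫ y in I01,
    ‖Rop s γ γ x y‖ ^ 2 * (⟪Dg γ u x, Dg γ v x⟫ + ⟪Dg γ u y, Dg γ v y⟫) * muW γ x y

/-- The Riemannian metric `G_γ(u,v)`. -/
def Gmet {n : ℕ} (s : ℝ) (γ u v : ℝ → En n) : ℝ :=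
  2 * B1 s γ u v + (2 * s + 1) * B2 s γ u v + B3 s γ u v + innerH1g γ u v + innerL2g γ u v

/-- The distortion `distor(γ) = sup_{x ≠ y} d_γ(x,y)/|γ(y) − γ(x)|`, valued in `[0,∞]`. -/
def distorE {n : ℕ} (γ : ℝ → En n) : ℝ≥0∞ :=
  ⨆ (x ∈ I01) (y ∈ I01) (_ : x ≠ y), ENNReal.ofReal (arcDist γ x y / ‖γ y - γ x‖)

/-- The distortion, real-valued. -/
def distor {n : ℕ} (γ : ℝ → En n) : ℝ := (distorE γ).toReal

/-- A `C¹` path `[0,1] → 𝓜 ⊂ H^s(𝕋,ℝⁿ)` (with respect to the `H^s` topology), recorded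
together with its velocity field `V`. -/
structure C1Path (s : ℝ) (n : ℕ) where
  Γ : ℝ → ℝ → En n
  V : ℝ → ℝ → En n
  mem : ∀ t ∈ Set.Icc (0 : ℝ) 1, InM s (Γ t)
  memV : ∀ t ∈ Set.Icc (0 : ℝ) 1, InHs s (V t)
  isDeriv : ∀ t ∈ Set.Icc (0 : ℝ) 1,
    Tendsto (fun h : ℝ => HsNorm s fun x => h⁻¹ • (Γ (t + h) x - Γ t x) - V t x)
      (𝓝[{h : ℝ | t + h ∈ Set.Icc (0 : ℝ) 1 ∧ h ≠ 0}] 0) (𝓝 0)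
  contV : ∀ t ∈ Set.Icc (0 : ℝ) 1,
    Tendsto (fun τ : ℝ => HsNorm s fun x => V τ x - V t x) (𝓝[Set.Icc (0 : ℝ) 1] t) (𝓝 0)

/-- Length of a path with respect to `G`. -/
def pathLen {s : ℝ} {n : ℕ} (P : C1Path s n) : ℝ :=
  ∫ t in (0 : ℝ)..1, Real.sqrt (Gmet s (P.Γ t) (P.V t) (P.V t))

/-- The path (Dirichlet) energy of a path with respect to `G`. -/
def pathEnergy {s : ℝ} {n : ℕ} (P : C1Path s n) : ℝ :=
  (1 / 2) * ∫ t in (0 : ℝ)..1, Gmet s (P.Γ t) (P.V t) (P.V t)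

/-- The geodesic distance induced by `G`, valued in `[0,∞]` (`∞` if there is no path). -/
def geodDist (s : ℝ) {n : ℕ} (γ₀ γ₁ : ℝ → En n) : ℝ≥0∞ :=
  ⨅ (P : C1Path s n) (_ : P.Γ 0 = γ₀ ∧ P.Γ 1 = γ₁), ENNReal.ofReal (pathLen P)

/-- `U ⊆ 𝓜` is bounded with respect to the geodesic distance `d_G`. -/
def GBounded (s : ℝ) {n : ℕ} (U : Set (ℝ → En n)) : Prop :=
  (∀ γ ∈ U, InM s γ) ∧
    ∃ γ₀, InM s γ₀ ∧ ∃ R : ℝ, ∀ γ ∈ U, geodDist s γ γ₀ ≤ ENNReal.ofReal R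

/-- Weak convergence in the Hilbert space `H^s(𝕋,ℝⁿ)`. -/
def WeakHsTendsto {n : ℕ} (s : ℝ) (γk : ℕ → ℝ → En n) (γ : ℝ → En n) : Prop :=
  ∀ v : ℝ → En n, InHs s v →
    Tendsto (fun k => HsInner s (γk k) v) atTop (𝓝 (HsInner s γ v))

/-- Directional derivative of `γ ↦ G_γ(u,v)` at `γ` in direction `w`. -/
def DGdir {n : ℕ} (s : ℝ) (γ w u v : ℝ → En n) : ℝ :=
  deriv (fun t : ℝ => Gmet s (fun x => γ x + t • w x) u v) 0

/-- `F'` is the derivative of the path `F` with respect to the `H^s` norm, on `S`. -/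
def IsHsDerivOn {n : ℕ} (s : ℝ) (F F' : ℝ → ℝ → En n) (S : Set ℝ) : Prop :=
  ∀ t ∈ S,
    Tendsto (fun h : ℝ => HsNorm s fun x => h⁻¹ • (F (t + h) x - F t x) - F' t x)
      (𝓝[{h : ℝ | t + h ∈ S ∧ h ≠ 0}] 0) (𝓝 0)

/-- The path `F` is continuous on `S` with respect to the `H^s` norm. -/
def HsContOn {n : ℕ} (s : ℝ) (F : ℝ → ℝ → En n) (S : Set ℝ) : Prop :=
  ∀ t ∈ S, Tendsto (fun τ : ℝ => HsNorm s fun x => F τ x - F t x) (𝓝[S] t) (𝓝 0)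

/-- A solution of the geodesic initial value problem on `[0,∞)`, recorded as a triple
(position `Γ`, velocity `V`, acceleration `W`); the geodesic equation
`Γ̈ + A_Γ(Γ̇)Γ̇ = 0` is expressed weakly via the Koszul formula for the
Christoffel operator `A`. -/
def GeodesicSol {n : ℕ} (s : ℝ) (γ₀ v₀ : ℝ → En n) (Γ V W : ℝ → ℝ → En n) : Prop :=
  (∀ t ∈ Set.Ici (0 : ℝ), InM s (Γ t) ∧ InHs s (V t) ∧ InHs s (W t)) ∧
  Γ 0 = γ₀ ∧ V 0 = v₀ ∧
  IsHsDerivOn s Γ V (Set.Ici 0) ∧ IsHsDerivOn s V W (Set.Ici 0) ∧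
  HsContOn s V (Set.Ici 0) ∧ HsContOn s W (Set.Ici 0) ∧
  ∀ t ∈ Set.Ici (0 : ℝ), ∀ w : ℝ → En n, InHs s w →
    Gmet s (Γ t) (W t) w + DGdir s (Γ t) (V t) (V t) w
      - (1 / 2) * DGdir s (Γ t) w (V t) (V t) = 0


lemma dT_nonneg (x y : ℝ) : 0 ≤ dT x y := Real.iInf_nonneg fun _ => abs_nonneg _

lemma dT_bdd (x y : ℝ) : BddBelow (Set.range fun k : ℤ => |x - y - (k : ℝ)|) :=
  ⟨0, by rintro _ ⟨k, rfl⟩; exact abs_nonneg _⟩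

lemma dT_le (x y : ℝ) : dT x y ≤ |x - y| := by
  have := ciInf_le (dT_bdd x y) 0
  simpa [dT] using this

lemma dT_le' (x y : ℝ) (k : ℤ) : dT x y ≤ |x - y - k| := ciInf_le (dT_bdd x y) k

lemma eq_of_dT {x y : ℝ} (hx : x ∈ I01) (hy : y ∈ I01) (h : dT x y = 0) : x = y := by
  have h1 : min |x - y| (1 - |x - y|) ≤ dT x y := by
    refine le_ciInf fun k => ?_
    rcases lt_trichotomy k 0 with hk | hk | hk
    · have : (k : ℝ) ≤ -1 := by exact_mod_cast (by omega : k ≤ -1)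
      refine (min_le_right _ _).trans ?_
      have := le_abs_self (x - y - k)
      have := neg_abs_le (x - y)
      linarith
    · subst hk; simp
    · have : (1 : ℝ) ≤ k := by exact_mod_cast (by omega : 1 ≤ k)
      refine (min_le_right _ _).trans ?_
      have := neg_abs_le (x - y - k)
      have := le_abs_self (x - y)
      linarith
  have h2 : |x - y| < 1 := by
    rw [abs_lt]; obtain ⟨a, b⟩ := hx; obtain ⟨c, d⟩ := hy
    constructor <;> linarith
  rw [h] at h1
  rcases min_le_iff.1 h1 with h3 | h3
  · have := abs_nonpos_iff.1 h3; linarith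
  · linarith

lemma measurable_dT : Measurable fun p : ℝ × ℝ => dT p.1 p.2 := by
  unfold dT
  exact Measurable.iInf fun k => by fun_prop

lemma arcDist_bounds {n : ℕ} {γ : ℝ → En n} (hc : Continuous (deriv γ)) {m M : ℝ}
    (hm0 : 0 ≤ m) (hM0 : 0 ≤ M)
    (hm : ∀ x, m ≤ ‖deriv γ x‖) (hM : ∀ x, ‖deriv γ x‖ ≤ M) (x y : ℝ) :
    m * dT x y ≤ arcDist γ x y ∧ arcDist γ x y ≤ M * dT x y := by
  have hcn : Continuous fun t => ‖deriv γ t‖ := hc.norm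
  have key : ∀ a b : ℝ, m * |a - b| ≤ |∫ t in a..b, ‖deriv γ t‖| ∧
      |∫ t in a..b, ‖deriv γ t‖| ≤ M * |a - b| := by
    intro a b
    constructor
    · wlog hab : a ≤ b generalizing a b
      · rw [intervalIntegral.integral_symm, abs_neg, abs_sub_comm]
        exact this b a (le_of_not_ge hab)
      · refine le_trans ?_ (le_abs_self _)
        have := intervalIntegral.integral_mono_on (μ := volume) (f := fun _ => m) hab
          (continuous_const.intervalIntegrable a b) (hcn.intervalIntegrable a b) (fun t _ => hm t)
        rw [intervalIntegral.integral_const] at this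
        rw [abs_sub_comm, abs_of_nonneg (by linarith)]
        simpa [mul_comm] using this
    · have := intervalIntegral.norm_integral_le_of_norm_le_const (a := a) (b := b)
        (f := fun t => ‖deriv γ t‖) (C := M) (fun t _ => by simpa using hM t)
      rw [abs_sub_comm]; simpa using this
  constructor
  · refine le_ciInf fun k => ?_
    refine le_trans ?_ (key x (y + k)).1
    have := dT_le' x y k
    rw [← sub_sub]
    gcongr
  · unfold dT
    rw [Real.mul_iInf_of_nonneg hM0]
    refine ciInf_mono ⟨0, by rintro _ ⟨k, rfl⟩; exact abs_nonneg _⟩ fun k => ?_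
    rw [sub_sub]
    exact (key x (y + k)).2

lemma gag_meas {n : ℕ} (σ : ℝ) {v : ℝ → En n} (hv : Continuous v) :
    Measurable fun p : ℝ × ℝ =>
      ENNReal.ofReal (‖v p.2 - v p.1‖ ^ 2 / dT p.1 p.2 ^ (2 * σ + 1)) := by
  have h1 : Measurable fun p : ℝ × ℝ => ‖v p.2 - v p.1‖ ^ 2 := by
    apply Continuous.measurable; fun_prop
  exact (h1.div (measurable_dT.pow_const _)).ennreal_ofReal

lemma gag_meas1 {n : ℕ} (σ : ℝ) {v : ℝ → En n} (hv : Continuous v) :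
    Measurable fun x => ∫⁻ y in I01,
      ENNReal.ofReal (‖v y - v x‖ ^ 2 / dT x y ^ (2 * σ + 1)) :=
  Measurable.lintegral_prod_right' (f := fun p : ℝ × ℝ =>
      ENNReal.ofReal (‖v p.2 - v p.1‖ ^ 2 / dT p.1 p.2 ^ (2 * σ + 1))) (gag_meas σ hv)

lemma gag_meas2 {n : ℕ} (σ : ℝ) {v : ℝ → En n} (hv : Continuous v) (x : ℝ) :
    Measurable fun y =>
      ENNReal.ofReal (‖v y - v x‖ ^ 2 / dT x y ^ (2 * σ + 1)) := by
  have h1 : Measurable fun y : ℝ => ‖v y - v x‖ ^ 2 := by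
    apply Continuous.measurable; fun_prop
  have h2 : Measurable fun y : ℝ => dT x y := by
    unfold dT
    exact Measurable.iInf fun k => by fun_prop
  exact (h1.div (h2.pow_const _)).ennreal_ofReal

lemma gag_comb {n : ℕ} (σ : ℝ) {w a b : ℝ → En n} (ha : Continuous a) (hb : Continuous b)
    {α β : ℝ} (hα : 0 ≤ α) (hβ : 0 ≤ β)
    (h : ∀ x ∈ I01, ∀ y ∈ I01,
      ‖w y - w x‖ ^ 2 ≤ α * ‖a y - a x‖ ^ 2 + β * ‖b y - b x‖ ^ 2) :
    gagliardoSqE σ w ≤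
      ENNReal.ofReal α * gagliardoSqE σ a + ENNReal.ofReal β * gagliardoSqE σ b := by
  have hI : MeasurableSet I01 := measurableSet_Ico
  have Ma := gag_meas1 σ ha
  have Mb := gag_meas1 σ hb
  unfold gagliardoSqE
  rw [← lintegral_const_mul _ Ma, ← lintegral_const_mul _ Mb,
    ← lintegral_add_left (Ma.const_mul _)]
  refine setLIntegral_mono' hI fun x hx => ?_
  have ma := gag_meas2 σ ha x
  have mb := gag_meas2 σ hb x
  rw [← lintegral_const_mul _ ma, ← lintegral_const_mul _ mb,
    ← lintegral_add_left (ma.const_mul _)]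
  refine setLIntegral_mono' hI fun y hy => ?_
  have hd : 0 ≤ dT x y ^ (2 * σ + 1) := Real.rpow_nonneg (dT_nonneg _ _) _
  rw [← ENNReal.ofReal_mul hα, ← ENNReal.ofReal_mul hβ,
    ← ENNReal.ofReal_add (by positivity) (by positivity)]
  apply ENNReal.ofReal_le_ofReal
  rw [← mul_div_assoc, ← mul_div_assoc, ← add_div]
  exact div_le_div_of_nonneg_right (h x hx y hy) hd

/-- Comparison of the two seminorms. -/
lemma gagGamma_le {n : ℕ} {s : ℝ} (hs : 3 / 2 < s) {γ : ℝ → En n} (hc : Continuous (deriv γ))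
    {m M : ℝ} (hm0 : 0 < m) (hM0 : 0 < M)
    (hm : ∀ x, m ≤ ‖deriv γ x‖) (hM : ∀ x, ‖deriv γ x‖ ≤ M) (u : ℝ → En n) :
    gagGammaSqE s γ u ≤ ENNReal.ofReal (M ^ 2 * (m ^ (2 * (s - 1) + 1))⁻¹) *
        gagliardoSqE (s - 1) (Dg γ u) ∧
    gagliardoSqE (s - 1) (Dg γ u) ≤ ENNReal.ofReal ((m ^ 2)⁻¹ * M ^ (2 * (s - 1) + 1)) *
        gagGammaSqE s γ u := by
  have hI : MeasurableSet I01 := measurableSet_Ico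
  have hp : 0 < 2 * (s - 1) + 1 := by linarith
  have aux : ∀ x y : ℝ, dT x y = 0 ∧ arcDist γ x y = 0 ∨ 0 < dT x y ∧ 0 < arcDist γ x y := by
    intro x y
    obtain ⟨h1, h2⟩ := arcDist_bounds hc hm0.le hM0.le hm hM x y
    rcases (dT_nonneg x y).eq_or_lt with h | h
    · left; rw [← h] at h1 h2; exact ⟨h.symm, by simp at h1 h2; linarith⟩
    · right; exact ⟨h, lt_of_lt_of_le (by positivity) h1⟩
  have rw1 : ∀ x y : ℝ, 0 < arcDist γ x y → ∀ q : ℝ,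
      q / arcDist γ x y ^ (2 * (s - 1)) * nuW γ x y =
      q * (‖deriv γ x‖ * ‖deriv γ y‖) / arcDist γ x y ^ (2 * (s - 1) + 1) := by
    intro x y h q
    rw [nuW, Real.rpow_add h, Real.rpow_one, div_mul_div_comm]
  constructor
  · unfold gagGammaSqE gagliardoSqE
    rw [← lintegral_const_mul' _ _ ENNReal.ofReal_ne_top]
    refine setLIntegral_mono' hI fun x hx => ?_
    rw [← lintegral_const_mul' _ _ ENNReal.ofReal_ne_top]
    refine setLIntegral_mono' hI fun y hy => ?_
    rw [← ENNReal.ofReal_mul (by positivity)]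
    apply ENNReal.ofReal_le_ofReal
    rcases aux x y with ⟨h1, h2⟩ | ⟨h1, h2⟩
    · simp [nuW, h1, h2, hp.ne']
    · rw [rw1 x y h2]
      obtain ⟨h3, h4⟩ := arcDist_bounds hc hm0.le hM0.le hm hM x y
      set q := ‖Dg γ u y - Dg γ u x‖ ^ 2
      have : 0 ≤ q := by positivity
      calc q * (‖deriv γ x‖ * ‖deriv γ y‖) / arcDist γ x y ^ (2 * (s - 1) + 1)
          ≤ q * (M * M) / (m * dT x y) ^ (2 * (s - 1) + 1) := by
            gcongr
            · exact hM x
            · exact hM y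
        _ = _ := by
            rw [Real.mul_rpow hm0.le h1.le]
            field_simp
  · unfold gagGammaSqE gagliardoSqE
    rw [← lintegral_const_mul' _ _ ENNReal.ofReal_ne_top]
    refine setLIntegral_mono' hI fun x hx => ?_
    rw [← lintegral_const_mul' _ _ ENNReal.ofReal_ne_top]
    refine setLIntegral_mono' hI fun y hy => ?_
    rw [← ENNReal.ofReal_mul (by positivity)]
    apply ENNReal.ofReal_le_ofReal
    rcases aux x y with ⟨h1, h2⟩ | ⟨h1, h2⟩
    · simp [nuW, h1, h2, hp.ne']
    · rw [rw1 x y h2]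
      obtain ⟨h3, h4⟩ := arcDist_bounds hc hm0.le hM0.le hm hM x y
      set q := ‖Dg γ u y - Dg γ u x‖ ^ 2
      have : 0 ≤ q := by positivity
      calc q / dT x y ^ (2 * (s - 1) + 1)
          = ((m ^ 2)⁻¹ * M ^ (2 * (s - 1) + 1)) * (q * (m * m) /
              (M * dT x y) ^ (2 * (s - 1) + 1)) := by
            rw [Real.mul_rpow hM0.le h1.le]
            field_simp
        _ ≤ _ := by
            gcongr
            · exact hm x
            · exact hm y

lemma lint_scale {x r : ℝ} (hx : x ∈ I01) (hr : 0 < r) (hr1 : r ≤ 1) (g : ℝ → ℝ≥0∞) :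
    ∫⁻ t in I01, g (x + r * (t - x)) ≤ ENNReal.ofReal r⁻¹ * ∫⁻ t in I01, g t := by
  have hI : MeasurableSet I01 := measurableSet_Ico
  have h := lintegral_image_eq_lintegral_abs_deriv_mul (f := fun t => x + r * (t - x))
    (f' := fun _ => r) hI (fun t _ => by
      have : HasDerivAt (fun t => x + r * (t - x)) (r * 1) t :=
        (((hasDerivAt_id t).sub_const x).const_mul r).const_add x
      simpa using this.hasDerivWithinAt)
    (fun a _ b _ hab => by
      have : r * (a - x) = r * (b - x) := by simpa using hab
      have := mul_left_cancel₀ hr.ne' this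
      linarith) g
  rw [lintegral_const_mul' _ _ ENNReal.ofReal_ne_top, abs_of_pos hr] at h
  have h2 : ∫⁻ t in (fun t => x + r * (t - x)) '' I01, g t ≤ ∫⁻ t in I01, g t := by
    apply lintegral_mono_set
    rintro _ ⟨t, ht, rfl⟩
    obtain ⟨a, b⟩ := hx
    obtain ⟨c, d⟩ := ht
    constructor
    · show 0 ≤ x + r * (t - x)
      nlinarith
    · show x + r * (t - x) < 1
      nlinarith
  calc ∫⁻ t in I01, g (x + r * (t - x))
      = ENNReal.ofReal r⁻¹ * (ENNReal.ofReal r * ∫⁻ t in I01, g (x + r * (t - x))) := by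
        rw [← mul_assoc, ← ENNReal.ofReal_mul (by positivity), inv_mul_cancel₀ hr.ne']
        simp
    _ ≤ _ := by
        rw [← h]
        gcongr

lemma mem_scale {x r t : ℝ} (hx : x ∈ I01) (ht : t ∈ I01) (hr : 0 < r) (hr1 : r ≤ 1) :
    x + r * (t - x) ∈ I01 := by
  obtain ⟨a, b⟩ := hx
  obtain ⟨c, d⟩ := ht
  constructor <;> nlinarith

lemma vol_I01 : (volume : Measure ℝ) I01 = 1 := by simp [I01]

lemma sob_step {n : ℕ} {σ : ℝ} (hσ : 1 / 2 < σ) {v : ℝ → En n} (hv : Continuous v)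
    (hG : gagliardoSqE σ v < ⊤) {x : ℝ} (hx : x ∈ I01) {r : ℝ} (hr : 0 < r) (hr1 : r ≤ 1)
    {ε : ℝ} (hε : 0 < ε) :
    ‖(∫ t in I01, v (x + r * (t - x))) - ∫ t in I01, v (x + r / 2 * (t - x))‖ ≤
      ε / 2 + r ^ (2 * σ - 1) / ε * (gagliardoSqE σ v).toReal := by
  have hI : MeasurableSet I01 := measurableSet_Ico
  have hp : 0 < 2 * σ + 1 := by linarith
  have hfin : IsFiniteMeasure ((volume : Measure ℝ).restrict I01) := ⟨by simp [vol_I01]⟩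
  have hint : ∀ w : ℝ → En n, Continuous w → IntegrableOn w I01 := fun w hw =>
    (hw.integrableOn_Icc (a := 0) (b := 1)).mono_set Set.Ico_subset_Icc_self
  set Φ : ℝ → ℝ → ℝ≥0∞ := fun a b => ENNReal.ofReal (‖v b - v a‖ ^ 2 / dT a b ^ (2 * σ + 1))
    with hΦ
  have e1 : (∫ t in I01, v (x + r * (t - x))) - ∫ t in I01, v (x + r / 2 * (t - x)) =
      ∫ τ in I01, ∫ t in I01, (v (x + r * (t - x)) - v (x + r / 2 * (τ - x))) := by
    have i1 := hint (fun t => v (x + r * (t - x))) (by fun_prop)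
    have i2 := hint (fun t => v (x + r / 2 * (t - x))) (by fun_prop)
    have : ∀ τ : ℝ, ∫ t in I01, (v (x + r * (t - x)) - v (x + r / 2 * (τ - x))) =
        (∫ t in I01, v (x + r * (t - x))) - v (x + r / 2 * (τ - x)) := by
      intro τ
      rw [integral_sub i1 (integrable_const _)]
      simp [Measure.real, vol_I01]
    simp_rw [this]
    rw [integral_sub (integrable_const _) i2]
    simp [Measure.real, vol_I01]
  have pt : ∀ τ ∈ I01, ∀ t ∈ I01, ‖v (x + r * (t - x)) - v (x + r / 2 * (τ - x))‖ₑ ≤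
      ENNReal.ofReal (ε / 2) + ENNReal.ofReal (r ^ (2 * σ + 1) / (2 * ε)) *
        Φ (x + r / 2 * (τ - x)) (x + r * (t - x)) := by
    intro τ hτ t ht
    have ma := mem_scale hx hτ (by positivity : 0 < r / 2) (by linarith)
    have mb := mem_scale hx ht hr hr1
    have hd : dT (x + r / 2 * (τ - x)) (x + r * (t - x)) ≤ r := by
      refine (dT_le _ _).trans ?_
      obtain ⟨a1, a2⟩ := hx
      obtain ⟨c1, c2⟩ := ht
      obtain ⟨d1, d2⟩ := hτ
      rw [abs_le]; constructor <;> nlinarith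
    set a := x + r / 2 * (τ - x)
    set b := x + r * (t - x)
    rw [← ofReal_norm, hΦ, ← ENNReal.ofReal_mul (by positivity),
      ← ENNReal.ofReal_add (by positivity)
        (mul_nonneg (by positivity) (div_nonneg (by positivity)
          (Real.rpow_nonneg (dT_nonneg _ _) _)))]
    apply ENNReal.ofReal_le_ofReal
    have k1 : ‖v b - v a‖ ^ 2 ≤ r ^ (2 * σ + 1) * (‖v b - v a‖ ^ 2 / dT a b ^ (2 * σ + 1)) := by
      rcases (dT_nonneg a b).eq_or_lt with h0 | h0
      · have := eq_of_dT ma mb h0.symm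
        rw [this]; simp
      · have h1 : dT a b ^ (2 * σ + 1) ≤ r ^ (2 * σ + 1) :=
          Real.rpow_le_rpow h0.le hd hp.le
        have h2 : 0 < dT a b ^ (2 * σ + 1) := Real.rpow_pos_of_pos h0 _
        rw [mul_div_assoc', le_div_iff₀ h2, mul_comm]
        gcongr
    set N := ‖v b - v a‖
    set Q := N ^ 2 / dT a b ^ (2 * σ + 1)
    have k2 : N ≤ ε / 2 + N ^ 2 / (2 * ε) := by
      have : ε / 2 + N ^ 2 / (2 * ε) - N = (N - ε) ^ 2 / (2 * ε) := by field_simp; ring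
      have h3 : 0 ≤ (N - ε) ^ 2 / (2 * ε) := by positivity
      linarith
    have k3 : N ^ 2 / (2 * ε) ≤ r ^ (2 * σ + 1) * Q / (2 * ε) := by gcongr
    have k4 : r ^ (2 * σ + 1) * Q / (2 * ε) = r ^ (2 * σ + 1) / (2 * ε) * Q := by ring
    linarith
  have big : ‖(∫ t in I01, v (x + r * (t - x))) - ∫ t in I01, v (x + r / 2 * (t - x))‖ₑ ≤
      ENNReal.ofReal (ε / 2) + ENNReal.ofReal (r ^ (2 * σ + 1) / (2 * ε)) *
        (ENNReal.ofReal (r / 2)⁻¹ * (ENNReal.ofReal r⁻¹ * gagliardoSqE σ v)) := by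
    rw [e1]
    calc _ ≤ ∫⁻ τ in I01, ‖∫ t in I01, (v (x + r * (t - x)) - v (x + r / 2 * (τ - x)))‖ₑ :=
          enorm_integral_le_lintegral_enorm _
      _ ≤ ∫⁻ τ in I01, (ENNReal.ofReal (ε / 2) + ENNReal.ofReal (r ^ (2 * σ + 1) / (2 * ε)) *
            (ENNReal.ofReal r⁻¹ * ∫⁻ t in I01, Φ (x + r / 2 * (τ - x)) t)) := by
          refine setLIntegral_mono' hI fun τ hτ => ?_
          calc _ ≤ ∫⁻ t in I01, ‖v (x + r * (t - x)) - v (x + r / 2 * (τ - x))‖ₑ :=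
                enorm_integral_le_lintegral_enorm _
            _ ≤ ∫⁻ t in I01, (ENNReal.ofReal (ε / 2) +
                  ENNReal.ofReal (r ^ (2 * σ + 1) / (2 * ε)) *
                  Φ (x + r / 2 * (τ - x)) (x + r * (t - x))) :=
                setLIntegral_mono' hI fun t ht => pt τ hτ t ht
            _ ≤ _ := by
                rw [lintegral_add_left measurable_const,
                  lintegral_const_mul' _ _ ENNReal.ofReal_ne_top]
                gcongr
                · simp [vol_I01]
                · exact lint_scale hx hr hr1 _
      _ ≤ _ := by
          rw [lintegral_add_left measurable_const,
            lintegral_const_mul' _ _ ENNReal.ofReal_ne_top,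
            lintegral_const_mul' _ _ ENNReal.ofReal_ne_top]
          have := lint_scale hx (by positivity : 0 < r / 2) (by linarith)
            (fun a => ∫⁻ t in I01, Φ a t)
          have h2 : ∫⁻ t in I01, ENNReal.ofReal (ε / 2) = ENNReal.ofReal (ε / 2) := by
            simp [vol_I01]
          rw [h2]
          have h5 : ENNReal.ofReal r⁻¹ * ∫⁻ τ in I01, ∫⁻ t in I01, Φ (x + r / 2 * (τ - x)) t ≤
              ENNReal.ofReal (r / 2)⁻¹ * (ENNReal.ofReal r⁻¹ * gagliardoSqE σ v) := by
            rw [← mul_assoc, mul_comm (ENNReal.ofReal (r / 2)⁻¹), mul_assoc]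
            exact mul_le_mul_right this _
          gcongr
  rw [← ENNReal.ofReal_toReal hG.ne, ← ofReal_norm,
    ← ENNReal.ofReal_mul (by positivity), ← ENNReal.ofReal_mul (by positivity),
    ← ENNReal.ofReal_mul (by positivity), ← ENNReal.ofReal_add (by positivity) (by positivity),
    ENNReal.ofReal_le_ofReal_iff (by positivity)] at big
  refine big.trans (le_of_eq ?_)
  have : r ^ (2 * σ + 1) = r ^ (2 * σ - 1) * r ^ 2 := by
    rw [← Real.rpow_natCast, ← Real.rpow_add hr]; congr 1; push_cast; ring
  rw [this]
  field_simp

lemma sob_core {n : ℕ} {σ : ℝ} (hσ : 1 / 2 < σ) : ∃ C : ℝ, 0 < C ∧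
    ∀ v : ℝ → En n, Continuous v → gagliardoSqE σ v < ⊤ → ∀ x ∈ I01,
      ‖v x‖ ≤ C * (1 + ((∫ t in I01, ‖v t‖ ^ 2) + (gagliardoSqE σ v).toReal)) := by
  set q : ℝ := (1 / 2 : ℝ) ^ (σ - 1 / 2) with hq
  have hq0 : 0 < q := by positivity
  have hq1 : q < 1 := Real.rpow_lt_one (by norm_num) (by norm_num) (by linarith)
  have h1q : 0 < 1 - q := by linarith
  refine ⟨1 + 1 / (1 - q), by positivity, ?_⟩
  intro v hv hG x hx
  set G := (gagliardoSqE σ v).toReal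
  have hG0 : 0 ≤ G := ENNReal.toReal_nonneg
  set a : ℝ → En n := fun r => ∫ t in I01, v (x + r * (t - x)) with ha
  have ea : ∀ r, a r = ∫ t in (0 : ℝ)..1, v (x + r * (t - x)) := by
    intro r
    rw [ha, intervalIntegral.integral_of_le zero_le_one]
    exact integral_Ico_eq_integral_Ioc
  have hac : Continuous a := by
    rw [show a = _ from funext ea]
    apply intervalIntegral.continuous_parametric_intervalIntegral_of_continuous'
    fun_prop
  have a0 : a 0 = v x := by simp [ha, Measure.real, vol_I01]
  have hlim : Tendsto (fun k : ℕ => a ((1 / 2 : ℝ) ^ k)) atTop (𝓝 (v x)) := by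
    rw [← a0]
    exact (hac.tendsto 0).comp
      (tendsto_pow_atTop_nhds_zero_of_lt_one (by norm_num) (by norm_num))
  have hstep : ∀ k : ℕ, dist (a ((1 / 2 : ℝ) ^ k)) (a ((1 / 2 : ℝ) ^ (k + 1))) ≤
      (1 / 2 + G) * q ^ k := by
    intro k
    have h := sob_step hσ hv hG hx (r := (1 / 2 : ℝ) ^ k) (by positivity)
      (pow_le_one₀ (by norm_num) (by norm_num)) (ε := q ^ k) (by positivity)
    have e : (1 / 2 : ℝ) ^ (k + 1) = (1 / 2 : ℝ) ^ k / 2 := by rw [pow_succ]; ring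
    rw [dist_eq_norm, e]
    refine h.trans (le_of_eq ?_)
    have e2 : ((1 / 2 : ℝ) ^ k) ^ (2 * σ - 1) = q ^ k * q ^ k := by
      rw [hq, ← Real.rpow_natCast, ← Real.rpow_natCast, ← Real.rpow_mul (by norm_num),
        ← Real.rpow_mul (by norm_num), ← Real.rpow_add (by norm_num)]
      congr 1; ring
    rw [e2, mul_div_assoc, div_self (by positivity)]
    ring
  have h1 := dist_le_of_le_geometric_of_tendsto₀ q (1 / 2 + G) hq1 hstep hlim
  have h2 : ‖a 1‖ ≤ 1 + ∫ t in I01, ‖v t‖ ^ 2 := by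
    have i1 : IntegrableOn (fun t => ‖v t‖) I01 :=
      (hv.norm.integrableOn_Icc (a := 0) (b := 1)).mono_set Set.Ico_subset_Icc_self
    have i2 : IntegrableOn (fun t => ‖v t‖ ^ 2) I01 :=
      ((hv.norm.pow 2).integrableOn_Icc (a := 0) (b := 1)).mono_set Set.Ico_subset_Icc_self
    have hfin : IsFiniteMeasure ((volume : Measure ℝ).restrict I01) := ⟨by simp [vol_I01]⟩
    calc ‖a 1‖ = ‖∫ t in I01, v t‖ := by simp [ha]
      _ ≤ ∫ t in I01, ‖v t‖ := norm_integral_le_integral_norm _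
      _ ≤ ∫ t in I01, (1 + ‖v t‖ ^ 2) := by
          apply integral_mono i1 ((integrable_const 1).add i2)
          intro t
          show ‖v t‖ ≤ 1 + ‖v t‖ ^ 2
          nlinarith [sq_nonneg (‖v t‖ - 1), norm_nonneg (v t)]
      _ = _ := by
          rw [integral_add (integrable_const 1) i2]
          simp [Measure.real, vol_I01]
  have hL0 : 0 ≤ ∫ t in I01, ‖v t‖ ^ 2 := integral_nonneg fun t => by positivity
  set L := ∫ t in I01, ‖v t‖ ^ 2
  rw [pow_zero] at h1
  have h3 : ‖v x‖ ≤ ‖a 1‖ + dist (a 1) (v x) := by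
    rw [dist_eq_norm]
    have := norm_sub_norm_le (v x) (a 1)
    rw [norm_sub_rev] at this
    linarith
  have h4 : (1 / 2 + G) / (1 - q) ≤ 1 / (1 - q) * (1 + (L + G)) := by
    rw [div_mul_eq_mul_div, one_mul]
    gcongr
    · norm_num
    · linarith
  rw [add_mul]
  linarith

lemma gag_smul {n : ℕ} (σ : ℝ) {v : ℝ → En n} (c : ℝ) :
    gagliardoSqE σ (fun x => c • v x) = ENNReal.ofReal (c ^ 2) * gagliardoSqE σ v := by
  unfold gagliardoSqE
  rw [← lintegral_const_mul' _ _ ENNReal.ofReal_ne_top]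
  congr 1; ext x
  rw [← lintegral_const_mul' _ _ ENNReal.ofReal_ne_top]
  congr 1; ext y
  rw [← ENNReal.ofReal_mul (by positivity), ← smul_sub, norm_smul, mul_pow]
  simp [mul_div_assoc]

lemma sobolev {n : ℕ} {σ : ℝ} (hσ : 1 / 2 < σ) : ∃ S : ℝ, 0 < S ∧
    ∀ v : ℝ → En n, Continuous v → gagliardoSqE σ v < ⊤ → ∀ x ∈ I01,
      ‖v x‖ ^ 2 ≤ S * ((∫ t in I01, ‖v t‖ ^ 2) + (gagliardoSqE σ v).toReal) := by
  obtain ⟨C, hC, h⟩ := sob_core (n := n) hσ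
  refine ⟨4 * C ^ 2, by positivity, fun v hv hG x hx => ?_⟩
  have key : ∀ c : ℝ, 0 < c →
      c * ‖v x‖ ≤ C * (1 + c ^ 2 * ((∫ t in I01, ‖v t‖ ^ 2) + (gagliardoSqE σ v).toReal)) := by
    intro c hc
    have := h (fun x => c • v x) (by fun_prop)
      (by rw [gag_smul]; exact ENNReal.mul_lt_top ENNReal.ofReal_lt_top hG) x hx
    rw [gag_smul, ENNReal.toReal_mul, ENNReal.toReal_ofReal (by positivity)] at this
    simp only [norm_smul, mul_pow, integral_const_mul, Real.norm_eq_abs, abs_of_pos hc] at this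
    rw [mul_add (c ^ 2)]; exact this
  have hL0 : 0 ≤ ∫ t in I01, ‖v t‖ ^ 2 := integral_nonneg fun t => by positivity
  have hN : 0 ≤ (∫ t in I01, ‖v t‖ ^ 2) + (gagliardoSqE σ v).toReal :=
    add_nonneg hL0 ENNReal.toReal_nonneg
  set N := (∫ t in I01, ‖v t‖ ^ 2) + (gagliardoSqE σ v).toReal
  set w := ‖v x‖
  have hw : 0 ≤ w := norm_nonneg _
  rcases hw.eq_or_lt with h0 | h0
  · rw [← h0, zero_pow two_ne_zero]; exact mul_nonneg (by positivity) hN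
  have k := key (2 * C / w) (by positivity)
  have e1 : 2 * C / w * w = 2 * C := by field_simp
  rw [e1] at k
  have k2 : 2 ≤ 1 + (2 * C / w) ^ 2 * N := by
    by_contra hcon
    push Not at hcon
    nlinarith
  have k3 : 1 ≤ (2 * C / w) ^ 2 * N := by linarith
  rw [div_pow, div_mul_eq_mul_div, le_div_iff₀ (by positivity)] at k3
  nlinarith

lemma contDeriv {n : ℕ} {s : ℝ} {u : ℝ → En n} (hu : InHs s u) : Continuous (deriv u) :=
  hu.2.1.continuous_deriv le_rfl

lemma exists_rep {n : ℕ} {s : ℝ} {u : ℝ → En n} (hu : InHs s u) (x : ℝ) :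
    ∃ t ∈ I01, deriv u t = deriv u x := by
  have hp : Function.Periodic (deriv u) 1 := by
    intro y
    have h1 : (fun t => u (t + 1)) = u := funext hu.1
    have h2 := deriv_comp_add_const (f := u) (1 : ℝ) y
    rw [h1] at h2
    exact h2.symm
  refine ⟨Int.fract x, ⟨Int.fract_nonneg x, Int.fract_lt_one x⟩, ?_⟩
  have := hp.sub_int_mul_eq (x := x) ⌊x⌋
  rw [Int.fract]
  simpa using this

lemma toReal_comb {X Y Z : ℝ≥0∞} {α β : ℝ} (hα : 0 ≤ α) (hβ : 0 ≤ β)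
    (hY : Y < ⊤) (hZ : Z < ⊤) (h : X ≤ ENNReal.ofReal α * Y + ENNReal.ofReal β * Z) :
    X < ⊤ ∧ X.toReal ≤ α * Y.toReal + β * Z.toReal := by
  have h1 : ENNReal.ofReal α * Y < ⊤ := ENNReal.mul_lt_top ENNReal.ofReal_lt_top hY
  have h2 : ENNReal.ofReal β * Z < ⊤ := ENNReal.mul_lt_top ENNReal.ofReal_lt_top hZ
  have h3 := ENNReal.add_lt_top.2 ⟨h1, h2⟩
  refine ⟨h.trans_lt h3, ?_⟩
  have := ENNReal.toReal_mono h3.ne h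
  rwa [ENNReal.toReal_add h1.ne h2.ne, ENNReal.toReal_mul, ENNReal.toReal_mul,
    ENNReal.toReal_ofReal hα, ENNReal.toReal_ofReal hβ] at this

lemma toReal_one {X Y : ℝ≥0∞} {α : ℝ} (hα : 0 ≤ α)
    (hY : Y < ⊤) (h : X ≤ ENNReal.ofReal α * Y) :
    X < ⊤ ∧ X.toReal ≤ α * Y.toReal := by
  have h1 : ENNReal.ofReal α * Y < ⊤ := ENNReal.mul_lt_top ENNReal.ofReal_lt_top hY
  refine ⟨h.trans_lt h1, ?_⟩
  have := ENNReal.toReal_mono h1.ne h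
  rwa [ENNReal.toReal_mul, ENNReal.toReal_ofReal hα] at this

lemma prod_pt {n : ℕ} {c d A B U δ : ℝ} {a b : En n} (hA : |c| ≤ A) (hB : |c - d| ≤ B * δ)
    (hU : ‖b‖ ^ 2 ≤ U) :
    ‖c • a - d • b‖ ^ 2 ≤ 2 * A ^ 2 * ‖a - b‖ ^ 2 + 2 * B ^ 2 * U * δ ^ 2 := by
  have e : c • a - d • b = c • (a - b) + (c - d) • b := by
    rw [smul_sub, sub_smul]; abel
  have h1 : ‖c • a - d • b‖ ≤ |c| * ‖a - b‖ + |c - d| * ‖b‖ := by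
    rw [e]
    refine (norm_add_le _ _).trans ?_
    rw [norm_smul, norm_smul, Real.norm_eq_abs, Real.norm_eq_abs]
  have h2 : ‖c • a - d • b‖ ^ 2 ≤ 2 * (|c| * ‖a - b‖) ^ 2 + 2 * (|c - d| * ‖b‖) ^ 2 := by
    have := pow_le_pow_left₀ (norm_nonneg _) h1 2
    nlinarith [sq_nonneg (|c| * ‖a - b‖ - |c - d| * ‖b‖)]
  have h3 : |c| ^ 2 ≤ A ^ 2 := pow_le_pow_left₀ (abs_nonneg _) hA 2
  have h4 : |c - d| ^ 2 ≤ (B * δ) ^ 2 := pow_le_pow_left₀ (abs_nonneg _) hB 2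
  have h5 : |c| ^ 2 * ‖a - b‖ ^ 2 ≤ A ^ 2 * ‖a - b‖ ^ 2 := by gcongr
  have h6 : |c - d| ^ 2 * ‖b‖ ^ 2 ≤ (B * δ) ^ 2 * U := by gcongr
  calc _ ≤ _ := h2
    _ = 2 * (|c| ^ 2 * ‖a - b‖ ^ 2) + 2 * (|c - d| ^ 2 * ‖b‖ ^ 2) := by ring
    _ ≤ 2 * (A ^ 2 * ‖a - b‖ ^ 2) + 2 * ((B * δ) ^ 2 * U) := by gcongr
    _ = _ := by ring

lemma int_mono {f g : ℝ → ℝ} (hf : Continuous f) (hg : Continuous g) {c : ℝ}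
    (h : ∀ x, f x ≤ c * g x) : ∫ x in I01, f x ≤ c * ∫ x in I01, g x := by
  have i : ∀ w : ℝ → ℝ, Continuous w → IntegrableOn w I01 := fun w hw =>
    (hw.integrableOn_Icc (a := 0) (b := 1)).mono_set Set.Ico_subset_Icc_self
  rw [← integral_const_mul]
  exact integral_mono (i f hf) ((i g hg).const_mul c) h

lemma main_bounds {n : ℕ} {s S : ℝ} (hs : 3 / 2 < s) (hS0 : 0 < S)
    (hS : ∀ v : ℝ → En n, Continuous v → gagliardoSqE (s - 1) v < ⊤ → ∀ x ∈ I01,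
      ‖v x‖ ^ 2 ≤ S * ((∫ t in I01, ‖v t‖ ^ 2) + (gagliardoSqE (s - 1) v).toReal))
    {γ u : ℝ → En n} (hγ : InM s γ) (hu : InHs s u) {m M G κ θ : ℝ} (hm0 : 0 < m)
    (hM0 : 0 < M) (hm : ∀ x, m ≤ ‖deriv γ x‖) (hM : ∀ x, ‖deriv γ x‖ ≤ M)
    (hG : G = (gagliardoSqE (s - 1) (deriv γ)).toReal)
    (hκ : κ = (m ^ 2)⁻¹ * M ^ (2 * (s - 1) + 1))
    (hθ : θ = M ^ 2 * (m ^ (2 * (s - 1) + 1))⁻¹) :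
    HsGammaNormSq s γ u ≤
      (M + m⁻¹ + θ * (2 * m⁻¹ ^ 2 + 2 * (m⁻¹ ^ 2) ^ 2 * S * G)) * HsNormSq s u ∧
    HsNormSq s u ≤
      (m⁻¹ + M ^ 2 * m⁻¹ + 2 * M ^ 2 * κ + 2 * S * G * (m⁻¹ + κ)) * HsGammaNormSq s γ u := by
  have cγ := contDeriv hγ.1
  have cu := contDeriv hu
  have cu0 : Continuous u := hu.2.1.continuous
  have hpos : ∀ x, 0 < ‖deriv γ x‖ := fun x => hm0.trans_le (hm x)
  have cv : Continuous (Dg γ u) := by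
    unfold Dg
    exact (cγ.norm.inv₀ fun x => (hpos x).ne').smul cu
  have nv : ∀ x, ‖Dg γ u x‖ = ‖deriv γ x‖⁻¹ * ‖deriv u x‖ := by
    intro x; rw [Dg, norm_smul, norm_inv, norm_norm]
  have hG0 : 0 ≤ G := hG ▸ ENNReal.toReal_nonneg
  have hκ0 : 0 ≤ κ := by rw [hκ]; positivity
  have hθ0 : 0 ≤ θ := by rw [hθ]; positivity
  have eL : innerL2g γ u u = ∫ x in I01, ‖u x‖ ^ 2 * ‖deriv γ x‖ := by
    simp [innerL2g]
  have eH : innerH1g γ u u = ∫ x in I01, ‖Dg γ u x‖ ^ 2 * ‖deriv γ x‖ := by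
    simp [innerH1g]
  have hinv : ∀ x, ‖deriv γ x‖⁻¹ ≤ m⁻¹ := fun x => inv_anti₀ hm0 (hm x)
  -- first comparison of the Gagliardo terms
  have U1 := hS (deriv u) cu hu.2.2
  have L0 : 0 ≤ ∫ x in I01, ‖u x‖ ^ 2 := integral_nonneg fun _ => by positivity
  have D0 : 0 ≤ ∫ x in I01, ‖deriv u x‖ ^ 2 := integral_nonneg fun _ => by positivity
  have V0 : 0 ≤ ∫ x in I01, ‖Dg γ u x‖ ^ 2 := integral_nonneg fun _ => by positivity
  have g0 : 0 ≤ (gagliardoSqE (s - 1) (deriv u)).toReal := ENNReal.toReal_nonneg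
  have w0 : 0 ≤ (gagliardoSqE (s - 1) (Dg γ u)).toReal := ENNReal.toReal_nonneg
  obtain ⟨fv, bv⟩ := toReal_comb (by positivity) (by positivity) hu.2.2 hγ.1.2.2
    (gag_comb (s - 1) (w := Dg γ u) cu cγ
    (α := 2 * m⁻¹ ^ 2) (β := 2 * (m⁻¹ ^ 2) ^ 2 * (S * ((∫ t in I01, ‖deriv u t‖ ^ 2) +
      (gagliardoSqE (s - 1) (deriv u)).toReal))) (by positivity) (by positivity)
    (fun x hx y hy => by
      refine prod_pt (A := m⁻¹) (B := m⁻¹ ^ 2) ?_ ?_ (U1 x hx)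
      · rw [abs_of_nonneg (by positivity)]; exact hinv y
      · have e : ‖deriv γ y‖⁻¹ - ‖deriv γ x‖⁻¹ =
            (‖deriv γ y‖⁻¹ * ‖deriv γ x‖⁻¹) * (‖deriv γ x‖ - ‖deriv γ y‖) := by
          have := hpos x; have := hpos y
          field_simp
        rw [e, abs_mul, abs_of_nonneg (by positivity : 0 ≤ ‖deriv γ y‖⁻¹ * ‖deriv γ x‖⁻¹),
          pow_two, norm_sub_rev]
        have := hinv x; have := hinv y
        have := abs_norm_sub_norm_le (deriv γ x) (deriv γ y)
        gcongr))
  obtain ⟨q1, q2⟩ := gagGamma_le hs cγ hm0 hM0 hm hM u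
  rw [← hκ] at q2
  rw [← hθ] at q1
  obtain ⟨fg, bg⟩ := toReal_one hθ0 fv q1
  obtain ⟨-, bg2⟩ := toReal_one hκ0 fg q2
  have U2 := hS (Dg γ u) cv fv
  obtain ⟨-, bu⟩ := toReal_comb (by positivity) (by positivity) fv hγ.1.2.2
    (gag_comb (s - 1) (w := deriv u) cv cγ
    (α := 2 * M ^ 2) (β := 2 * 1 ^ 2 * (S * ((∫ t in I01, ‖Dg γ u t‖ ^ 2) +
      (gagliardoSqE (s - 1) (Dg γ u)).toReal))) (by positivity) (by positivity)
    (fun x hx y hy => by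
      have e : ∀ z, deriv u z = ‖deriv γ z‖ • Dg γ u z := by
        intro z
        rw [Dg, smul_smul, mul_inv_cancel₀ (hpos z).ne', one_smul]
      rw [e x, e y]
      refine prod_pt (A := M) (B := 1) ?_ ?_ (U2 x hx)
      · rw [abs_of_nonneg (by positivity)]; exact hM y
      · rw [one_mul]; exact abs_norm_sub_norm_le _ _))
  have i1 : innerL2g γ u u ≤ M * ∫ x in I01, ‖u x‖ ^ 2 := by
    rw [eL]
    refine int_mono (by fun_prop) (by fun_prop) fun x => ?_
    rw [mul_comm]
    have := hM x
    gcongr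
  have i2 : ∫ x in I01, ‖u x‖ ^ 2 ≤ m⁻¹ * innerL2g γ u u := by
    rw [eL]
    refine int_mono (by fun_prop) (by fun_prop) fun x => ?_
    rw [inv_mul_eq_div, le_div_iff₀ hm0]
    have := hm x
    gcongr
  have i3 : innerH1g γ u u ≤ m⁻¹ * ∫ x in I01, ‖deriv u x‖ ^ 2 := by
    rw [eH]
    refine int_mono (by fun_prop) (by fun_prop) fun x => ?_
    have e : ‖Dg γ u x‖ ^ 2 * ‖deriv γ x‖ = ‖deriv γ x‖⁻¹ * ‖deriv u x‖ ^ 2 := by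
      rw [nv]; have := hpos x; field_simp
    rw [e]
    have := hinv x
    gcongr
  have i4 : ∫ x in I01, ‖Dg γ u x‖ ^ 2 ≤ m⁻¹ * innerH1g γ u u := by
    rw [eH]
    refine int_mono (by fun_prop) (by fun_prop) fun x => ?_
    rw [inv_mul_eq_div, le_div_iff₀ hm0]
    have := hm x
    gcongr
  have i5 : ∫ x in I01, ‖deriv u x‖ ^ 2 ≤ M ^ 2 * ∫ x in I01, ‖Dg γ u x‖ ^ 2 := by
    refine int_mono (by fun_prop) (by fun_prop) fun x => ?_
    have e : ‖deriv u x‖ ^ 2 = ‖deriv γ x‖ ^ 2 * ‖Dg γ u x‖ ^ 2 := by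
      rw [nv]; have := hpos x; field_simp
    rw [e]
    have := hM x
    gcongr
  have a0 : 0 ≤ innerL2g γ u u := by rw [eL]; exact integral_nonneg fun _ => by positivity
  have b0 : 0 ≤ innerH1g γ u u := by rw [eH]; exact integral_nonneg fun _ => by positivity
  have c0 : 0 ≤ (gagGammaSqE s γ u).toReal := ENNReal.toReal_nonneg
  rw [← hG] at bv bu
  unfold HsGammaNormSq HsNormSq gagGammaSq
  have hi : 0 < m⁻¹ := by positivity
  generalize (gagGammaSqE s γ u).toReal = c at *
  generalize innerL2g γ u u = a at *
  generalize innerH1g γ u u = b at *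
  generalize (gagliardoSqE (s - 1) (deriv u)).toReal = g at *
  generalize (gagliardoSqE (s - 1) (Dg γ u)).toReal = w at *
  generalize (∫ x in I01, ‖u x‖ ^ 2) = L at *
  generalize (∫ x in I01, ‖deriv u x‖ ^ 2) = D at *
  generalize (∫ x in I01, ‖Dg γ u x‖ ^ 2) = V at *
  clear hκ hθ hG q1 q2 hS U1 U2
  generalize m⁻¹ = μ at *
  constructor
  · have h1 : θ * w ≤ θ * (2 * μ ^ 2 * g + 2 * (μ ^ 2) ^ 2 * (S * (D + g)) * G) := by gcongr
    have h2 : 0 ≤ M * (D + g) := by positivity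
    have h3 : 0 ≤ μ * (L + g) := by positivity
    have h4 : 0 ≤ θ * (2 * μ ^ 2 * (L + D)) := by positivity
    have h5 : 0 ≤ θ * (2 * (μ ^ 2) ^ 2 * S * G * L) := by positivity
    linarith
  · have h1 : M ^ 2 * V ≤ M ^ 2 * (μ * b) := by gcongr
    have h2 : 2 * M ^ 2 * w ≤ 2 * M ^ 2 * (κ * c) := by gcongr
    have h3 : 2 * 1 ^ 2 * (S * (V + w)) * G ≤ 2 * 1 ^ 2 * (S * (μ * b + κ * c)) * G := by gcongr
    have h4 : 0 ≤ μ * (b + c) := by positivity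
    have h5 : 0 ≤ M ^ 2 * μ * (a + c) := by positivity
    have h6 : 0 ≤ 2 * M ^ 2 * κ * (a + b) := by positivity
    have h7 : 0 ≤ 2 * S * G * μ * (a + c) := by positivity
    have h8 : 0 ≤ 2 * S * G * κ * (a + b) := by positivity
    linarith

lemma young_opt {a b c : ℝ} (ha : 0 ≤ a) (hb : 0 ≤ b) (hc : 0 ≤ c)
    (h : ∀ t : ℝ, 0 < t → a ≤ (1 + t) * b + (1 + t⁻¹) * c) : √a ≤ √b + √c := by
  refine le_of_forall_pos_le_add fun ε hε => ?_
  set B := √b + ε / 2 with hB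
  set C := √c + ε / 2 with hC
  have B0 : 0 < B := by positivity
  have C0 : 0 < C := by positivity
  have hb2 : b ≤ B ^ 2 := by
    rw [← Real.sq_sqrt hb]; apply pow_le_pow_left₀ (by positivity); linarith
  have hc2 : c ≤ C ^ 2 := by
    rw [← Real.sq_sqrt hc]; apply pow_le_pow_left₀ (by positivity); linarith
  have : a ≤ (B + C) ^ 2 := by
    calc a ≤ (1 + C / B) * b + (1 + (C / B)⁻¹) * c := h _ (by positivity)
      _ ≤ (1 + C / B) * B ^ 2 + (1 + (C / B)⁻¹) * C ^ 2 := by gcongr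
      _ = _ := by field_simp; ring
  have := (Real.sqrt_le_left (by positivity)).2 this
  linarith

lemma young_pt {n : ℕ} {t : ℝ} (ht : 0 < t) {w a b : En n} (h : ‖w‖ ≤ ‖a‖ + ‖b‖) :
    ‖w‖ ^ 2 ≤ (1 + t) * ‖a‖ ^ 2 + (1 + t⁻¹) * ‖b‖ ^ 2 := by
  have h1 := pow_le_pow_left₀ (norm_nonneg _) h 2
  have h2 : 0 ≤ t⁻¹ * (t * ‖a‖ - ‖b‖) ^ 2 := by positivity
  have h3 : t⁻¹ * (t * ‖a‖ - ‖b‖) ^ 2 = t * ‖a‖ ^ 2 - 2 * ‖a‖ * ‖b‖ + t⁻¹ * ‖b‖ ^ 2 := by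
    field_simp
    ring
  nlinarith

lemma gag_tri {n : ℕ} {σ : ℝ} {w a b : ℝ → En n} (ha : Continuous a) (hb : Continuous b)
    (fa : gagliardoSqE σ a < ⊤) (fb : gagliardoSqE σ b < ⊤)
    (h : ∀ x y, ‖w y - w x‖ ≤ ‖a y - a x‖ + ‖b y - b x‖) :
    gagliardoSqE σ w < ⊤ ∧ √(gagliardoSqE σ w).toReal ≤
      √(gagliardoSqE σ a).toReal + √(gagliardoSqE σ b).toReal := by
  have key : ∀ t : ℝ, 0 < t → _ := fun t ht =>
    toReal_comb (α := 1 + t) (β := 1 + t⁻¹) (by positivity) (by positivity) fa fb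
      (gag_comb σ ha hb (by positivity) (by positivity)
        fun x _ y _ => young_pt ht (h x y))
  exact ⟨(key 1 one_pos).1, young_opt ENNReal.toReal_nonneg ENNReal.toReal_nonneg
    ENNReal.toReal_nonneg fun t ht => (key t ht).2⟩

lemma iInf_close {f g : ℝ → ℝ} {e : ℝ} (hf : BddBelow (Set.range f))
    (h : ∀ x, f x ≤ g x + e) : (⨅ x, f x) ≤ (⨅ x, g x) + e := by
  rw [← sub_le_iff_le_add]
  refine le_ciInf fun x => ?_
  have := ciInf_le hf x
  linarith [h x]

lemma iSup_close {f g : ℝ → ℝ} {e : ℝ} (hg : BddAbove (Set.range g))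
    (h : ∀ x, f x ≤ g x + e) : (⨆ x, f x) ≤ (⨆ x, g x) + e := by
  refine ciSup_le fun x => ?_
  have := le_ciSup hg x
  linarith [h x]

/-- The upper constant. -/
def phiF (s S : ℝ) (q : ℝ × ℝ × ℝ) : ℝ :=
  √(q.2.1 + q.1⁻¹ + (q.2.1 ^ 2 * (q.1 ^ (2 * (s - 1) + 1))⁻¹) *
    (2 * q.1⁻¹ ^ 2 + 2 * (q.1⁻¹ ^ 2) ^ 2 * S * q.2.2 ^ 2))

/-- The inverse of the lower constant. -/
def phif (s S : ℝ) (q : ℝ × ℝ × ℝ) : ℝ :=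
  √(q.1⁻¹ + q.2.1 ^ 2 * q.1⁻¹ + 2 * q.2.1 ^ 2 * ((q.1 ^ 2)⁻¹ * q.2.1 ^ (2 * (s - 1) + 1)) +
    2 * S * q.2.2 ^ 2 * (q.1⁻¹ + (q.1 ^ 2)⁻¹ * q.2.1 ^ (2 * (s - 1) + 1)))

lemma phiF_pos {s S : ℝ} (hS : 0 < S) {q : ℝ × ℝ × ℝ} (h1 : 0 < q.1) (h2 : 0 < q.2.1) :
    0 < phiF s S q := by
  unfold phiF; positivity

lemma phif_pos {s S : ℝ} (hS : 0 < S) {q : ℝ × ℝ × ℝ} (h1 : 0 < q.1) (h2 : 0 < q.2.1) :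
    0 < phif s S q := by
  unfold phif; positivity

lemma phiF_cont {s S : ℝ} {q : ℝ × ℝ × ℝ} (h1 : 0 < q.1) (h2 : 0 < q.2.1) :
    ContinuousAt (phiF s S) q := by
  have c1 : ContinuousAt (fun q : ℝ × ℝ × ℝ => q.1⁻¹) q := continuousAt_fst.inv₀ h1.ne'
  have c2 : ContinuousAt (fun q : ℝ × ℝ × ℝ => (q.1 ^ (2 * (s - 1) + 1))⁻¹) q :=
    (continuousAt_fst.rpow_const (Or.inl h1.ne')).inv₀ (Real.rpow_pos_of_pos h1 _).ne'
  unfold phiF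
  fun_prop

lemma phif_cont {s S : ℝ} {q : ℝ × ℝ × ℝ} (h1 : 0 < q.1) (h2 : 0 < q.2.1) :
    ContinuousAt (phif s S) q := by
  have c1 : ContinuousAt (fun q : ℝ × ℝ × ℝ => q.1⁻¹) q := continuousAt_fst.inv₀ h1.ne'
  have c3 : ContinuousAt (fun q : ℝ × ℝ × ℝ => (q.1 ^ 2)⁻¹) q :=
    (continuousAt_fst.pow 2).inv₀ (pow_pos h1 2).ne'
  have c2 : ContinuousAt (fun q : ℝ × ℝ × ℝ => q.2.1 ^ (2 * (s - 1) + 1)) q :=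
    ContinuousAt.rpow_const (by fun_prop) (Or.inl h2.ne')
  unfold phif
  fun_prop

/-- The three controlling quantities. -/
def trip {n : ℕ} (s : ℝ) (γ : ℝ → En n) : ℝ × ℝ × ℝ :=
  (⨅ x, ‖deriv γ x‖, ⨆ x, ‖deriv γ x‖, √(gagliardoSqE (s - 1) (deriv γ)).toReal)

lemma bddB {n : ℕ} (γ : ℝ → En n) : BddBelow (Set.range fun x => ‖deriv γ x‖) :=
  ⟨0, by rintro _ ⟨k, rfl⟩; exact norm_nonneg _⟩

lemma bddA {n : ℕ} {s : ℝ} {γ : ℝ → En n} (hγ : InHs s γ) :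
    BddAbove (Set.range fun x => ‖deriv γ x‖) := by
  obtain ⟨C, hC⟩ := (isCompact_Icc (a := (0 : ℝ)) (b := 1)).exists_bound_of_continuousOn
    (contDeriv hγ).continuousOn
  refine ⟨C, ?_⟩
  rintro _ ⟨x, rfl⟩
  obtain ⟨t, ht, e⟩ := exists_rep hγ x
  show ‖deriv γ x‖ ≤ C
  rw [← e]
  exact hC t (Set.Ico_subset_Icc_self ht)

lemma trip_pos {n : ℕ} {s : ℝ} {γ : ℝ → En n} (hγ : InM s γ) :
    0 < (trip s γ).1 ∧ 0 < (trip s γ).2.1 := by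
  have h1 : 0 < ⨅ x, ‖deriv γ x‖ := by
    obtain ⟨t, ht, h⟩ := (isCompact_Icc (a := (0 : ℝ)) (b := 1)).exists_isMinOn
      ⟨0, by simp⟩ (contDeriv hγ.1).norm.continuousOn
    refine lt_of_lt_of_le (norm_pos_iff.2 (hγ.2.2 t)) (le_ciInf fun x => ?_)
    obtain ⟨y, hy, e⟩ := exists_rep hγ.1 x
    rw [← e]
    exact h (Set.Ico_subset_Icc_self hy)
  refine ⟨h1, h1.trans_le ?_⟩
  exact (ciInf_le (bddB γ) 0).trans (le_ciSup (bddA hγ.1) 0)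

lemma trip_close {n : ℕ} {s S : ℝ} (hS0 : 0 < S)
    (hS : ∀ v : ℝ → En n, Continuous v → gagliardoSqE (s - 1) v < ⊤ → ∀ x ∈ I01,
      ‖v x‖ ^ 2 ≤ S * ((∫ t in I01, ‖v t‖ ^ 2) + (gagliardoSqE (s - 1) v).toReal))
    {γ η : ℝ → En n} (hγ : InM s γ) (hη : InM s η) :
    dist (trip s η) (trip s γ) ≤ (√S + 1) * HsNorm s (fun x => η x - γ x) := by
  have cγ := contDeriv hγ.1
  have cη := contDeriv hη.1
  have dγ : Differentiable ℝ γ := hγ.1.2.1.differentiable (by norm_num)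
  have dη : Differentiable ℝ η := hη.1.2.1.differentiable (by norm_num)
  have ed : deriv (fun x => η x - γ x) = fun x => deriv η x - deriv γ x := by
    ext1 x; exact deriv_fun_sub (dη x) (dγ x)
  have t1 := gag_tri (w := fun x => deriv η x - deriv γ x) cη cγ hη.1.2.2 hγ.1.2.2
    (fun x y => by
      have : deriv η y - deriv γ y - (deriv η x - deriv γ x) =
        (deriv η y - deriv η x) - (deriv γ y - deriv γ x) := by abel
      rw [this]; exact norm_sub_le _ _)
  have fd := t1.1
  have cd : Continuous fun x => deriv η x - deriv γ x := cη.sub cγ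
  have t2 := (gag_tri (w := deriv η) cγ cd hγ.1.2.2 fd (fun x y => by
      have : deriv η y - deriv η x =
        (deriv γ y - deriv γ x) + (deriv η y - deriv γ y - (deriv η x - deriv γ x)) := by abel
      rw [this]; exact norm_add_le _ _)).2
  have t3 := (gag_tri (w := deriv γ) cη cd hη.1.2.2 fd (fun x y => by
      have : deriv γ y - deriv γ x =
        (deriv η y - deriv η x) - (deriv η y - deriv γ y - (deriv η x - deriv γ x)) := by abel
      rw [this]; exact norm_sub_le _ _)).2
  have sb := hS _ cd fd
  have L0 : 0 ≤ ∫ x in I01, ‖η x - γ x‖ ^ 2 := integral_nonneg fun _ => by positivity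
  have D0 : 0 ≤ ∫ x in I01, ‖deriv η x - deriv γ x‖ ^ 2 :=
    integral_nonneg fun _ => by positivity
  have g0 : 0 ≤ (gagliardoSqE (s - 1) fun x => deriv η x - deriv γ x).toReal :=
    ENNReal.toReal_nonneg
  have eH : HsNorm s (fun x => η x - γ x) = √((∫ x in I01, ‖η x - γ x‖ ^ 2) +
      (∫ x in I01, ‖deriv η x - deriv γ x‖ ^ 2) +
      (gagliardoSqE (s - 1) fun x => deriv η x - deriv γ x).toReal) := by
    rw [HsNorm, HsNormSq, ed]
  set H := HsNorm s (fun x => η x - γ x) with hH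
  have H0 : 0 ≤ H := Real.sqrt_nonneg _
  have sg : √(gagliardoSqE (s - 1) fun x => deriv η x - deriv γ x).toReal ≤ H := by
    rw [eH]; apply Real.sqrt_le_sqrt; linarith
  have sup : ∀ x, ‖deriv η x - deriv γ x‖ ≤ √S * H := by
    have h01 : ∀ x ∈ I01, ‖deriv η x - deriv γ x‖ ≤ √S * H := by
      intro x hx
      rw [eH, ← Real.sqrt_mul hS0.le]
      apply Real.le_sqrt_of_sq_le
      refine (sb x hx).trans ?_
      gcongr
      linarith
    intro x
    have hd : InHs s (fun x => η x - γ x) := by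
      refine ⟨fun x => ?_, hη.1.2.1.sub hγ.1.2.1, by rw [ed]; exact fd⟩
      show η (x + 1) - γ (x + 1) = η x - γ x
      rw [hη.1.1 x, hγ.1.1 x]
    obtain ⟨t, ht, e⟩ := exists_rep hd x
    rw [ed] at e
    have e' : deriv η t - deriv γ t = deriv η x - deriv γ x := e
    rw [← e']
    exact h01 t ht
  have p1 : ∀ x, ‖deriv η x‖ ≤ ‖deriv γ x‖ + √S * H := fun x => by
    have := norm_sub_norm_le (deriv η x) (deriv γ x)
    linarith [sup x]
  have p2 : ∀ x, ‖deriv γ x‖ ≤ ‖deriv η x‖ + √S * H := fun x => by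
    have := norm_sub_norm_le (deriv γ x) (deriv η x)
    rw [norm_sub_rev] at this
    linarith [sup x]
  have hSH : 0 ≤ √S * H := by positivity
  have q1 := iInf_close (bddB η) p1
  have q2 := iInf_close (bddB γ) p2
  have q3 := iSup_close (bddA hγ.1) p1
  have q4 := iSup_close (bddA hη.1) p2
  rw [Prod.dist_eq, Prod.dist_eq]
  simp only [trip, Real.dist_eq]
  refine max_le ?_ (max_le ?_ ?_) <;> rw [abs_le] <;> constructor <;> linarith

/-- norm equivalence: there are continuous functions
`f, F : 𝓜 → (0,∞)` (continuity with respect to the `H^s` topology on `𝓜`) such that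
`f(γ)·‖u‖_{H^s} ≤ ‖u‖_{H^s(γ)} ≤ F(γ)·‖u‖_{H^s}` for every `γ ∈ 𝓜` and `u ∈ H^s(𝕋,ℝⁿ)`;
in particular, for each `γ ∈ 𝓜` the norms `‖·‖_{H^s(γ)}` and `‖·‖_{H^s}` are equivalent. -/
theorem statement4 (s : ℝ) (hs : s ∈ Set.Ioo (3 / 2 : ℝ) 2) (n : ℕ) (hn : 2 ≤ n) :
    ∃ f F : (ℝ → En n) → ℝ,
      (∀ γ, InM s γ → 0 < f γ) ∧ (∀ γ, InM s γ → 0 < F γ) ∧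
      (∀ γ, InM s γ → ∀ ε : ℝ, 0 < ε → ∃ δ : ℝ, 0 < δ ∧ ∀ η, InM s η →
        HsNorm s (fun x => η x - γ x) < δ → |f η - f γ| < ε ∧ |F η - F γ| < ε) ∧
      (∀ γ, InM s γ → ∀ u : ℝ → En n, InHs s u →
        f γ * HsNorm s u ≤ HsGammaNorm s γ u ∧ HsGammaNorm s γ u ≤ F γ * HsNorm s u) := by
  have hs1 : 3 / 2 < s := hs.1
  obtain ⟨S, hS0, hS⟩ := sobolev (n := n) (σ := s - 1) (by linarith)
  refine ⟨fun γ => (phif s S (trip s γ))⁻¹, fun γ => phiF s S (trip s γ), ?_, ?_, ?_, ?_⟩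
  · intro γ hγ
    exact inv_pos.2 (phif_pos hS0 (trip_pos hγ).1 (trip_pos hγ).2)
  · intro γ hγ
    exact phiF_pos hS0 (trip_pos hγ).1 (trip_pos hγ).2
  · intro γ hγ ε hε
    obtain ⟨h1, h2⟩ := trip_pos hγ
    have c1 : ContinuousAt (fun q => (phif s S q)⁻¹) (trip s γ) :=
      (phif_cont h1 h2).inv₀ (phif_pos hS0 h1 h2).ne'
    have c2 : ContinuousAt (phiF s S) (trip s γ) := phiF_cont h1 h2
    obtain ⟨δ₁, hδ₁, k1⟩ := Metric.continuousAt_iff.1 c1 ε hε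
    obtain ⟨δ₂, hδ₂, k2⟩ := Metric.continuousAt_iff.1 c2 ε hε
    refine ⟨min δ₁ δ₂ / (√S + 1), by positivity, fun η hη hd => ?_⟩
    have hc := trip_close hS0 hS hγ hη
    rw [lt_div_iff₀ (by positivity), mul_comm] at hd
    have hlt := hc.trans_lt hd
    exact ⟨k1 (hlt.trans_le (min_le_left _ _)), k2 (hlt.trans_le (min_le_right _ _))⟩
  · intro γ hγ u hu
    obtain ⟨h1, h2⟩ := trip_pos hγ
    obtain ⟨b1, b2⟩ := main_bounds hs1 hS0 hS hγ hu (m := (trip s γ).1) (M := (trip s γ).2.1)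
      (G := (trip s γ).2.2 ^ 2) h1 h2 (fun x => ciInf_le (bddB γ) x)
      (fun x => le_ciSup (bddA hγ.1) x) (Real.sq_sqrt ENNReal.toReal_nonneg) rfl rfl
    have pf := phif_pos (s := s) hS0 h1 h2
    constructor
    · rw [inv_mul_le_iff₀ pf]
      unfold phif HsGammaNorm HsNorm
      rw [← Real.sqrt_mul (by positivity)]
      exact Real.sqrt_le_sqrt b2
    · unfold phiF HsGammaNorm HsNorm
      rw [← Real.sqrt_mul (by positivity)]
      exact Real.sqrt_le_sqrt b1
end
end

section
/- The metric G is invariant under reparameterization: if φ : 𝕋 → 𝕋 is an orientation-preserving C¹-diffeomorphism of class H^s and γ ∈ 𝓜 (so that also γ∘φ ∈ 𝓜), then G_{γ∘φ}(u∘φ, v∘φ) = G_γ(u, v) for all u, v ∈ H^s(𝕋, ℝⁿ). -/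
open MeasureTheory Real Filter Set
open scoped ENNReal Topology RealInnerProductSpace

noncomputable section

namespace S6

lemma bdd_of_periodic {E : Type*} [NormedAddCommGroup E] {f : ℝ → E} (hf : Continuous f)
    (hp : Function.Periodic f 1) : ∃ C : ℝ, 0 < C ∧ ∀ x, ‖f x‖ ≤ C := by
  obtain ⟨C, hC⟩ := (isCompact_Icc (a := (0 : ℝ)) (b := 1)).exists_bound_of_continuousOn
    hf.continuousOn
  refine ⟨max C 1, by positivity, fun x => ?_⟩
  obtain ⟨y, hy, hxy⟩ := hp.exists_mem_Ico₀ one_pos x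
  rw [hxy]
  exact (hC y ⟨hy.1, hy.2.le⟩).trans (le_max_left _ _)

lemma deriv_periodic {E : Type*} [NormedAddCommGroup E] [NormedSpace ℝ E] {f : ℝ → E}
    (hp : Function.Periodic f 1) : Function.Periodic (deriv f) 1 := by
  intro x
  have h : (fun y => f (y + 1)) = f := funext hp
  rw [← deriv_comp_add_const, h]

lemma per_int {E : Type*} {f : ℝ → E} (hp : Function.Periodic f 1) (x : ℝ) (k : ℤ) :
    f (x + k) = f x := by
  have := (hp.int_mul k) x
  simpa using this

lemma dT_eq (x y : ℝ) : dT x y = |x - y - (round (x - y) : ℤ)| := by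
  apply le_antisymm
  · exact ciInf_le ⟨0, by rintro _ ⟨k, rfl⟩; exact abs_nonneg _⟩ (round (x - y))
  · exact le_ciInf fun k => round_le _ _

lemma dT_le (x y : ℝ) (k : ℤ) : dT x y ≤ |x - y - k| :=
  ciInf_le ⟨0, by rintro _ ⟨k, rfl⟩; exact abs_nonneg _⟩ k

lemma dT_nonneg (x y : ℝ) : 0 ≤ dT x y := by rw [dT_eq]; exact abs_nonneg _

lemma dT_add_left (x y : ℝ) : dT (x + 1) y = dT x y := by
  have h : x + 1 - y = x - y + 1 := by ring
  rw [dT_eq, dT_eq, h, round_add_one]; push_cast; congr 1; ring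

lemma dT_add_right (x y : ℝ) : dT x (y + 1) = dT x y := by
  have h : x - (y + 1) = x - y - 1 := by ring
  rw [dT_eq, dT_eq, h, round_sub_one]; push_cast; congr 1; ring

lemma dT_meas : Measurable (fun p : ℝ × ℝ => dT p.1 p.2) := by
  unfold dT
  apply Measurable.iInf
  intro k
  exact ((measurable_fst.sub measurable_snd).sub_const _).norm

section cov
variable {φ : ℝ → ℝ} (hφ1 : ContDiff ℝ 1 φ) (hφ2 : ∀ x, 0 < deriv φ x)
  (hφ3 : ∀ x, φ (x + 1) = φ x + 1)

lemma I01_restrict : (volume : Measure ℝ).restrict I01 = volume.restrict (Ioc 0 1) :=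
  Measure.restrict_congr_set Ico_ae_eq_Ioc

lemma image_Ioc (hφ1 : ContDiff ℝ 1 φ) (hφ2 : ∀ x, 0 < deriv φ x)
    (hφ3 : ∀ x, φ (x + 1) = φ x + 1) : φ '' Ioc 0 1 = Ioc (φ 0) (φ 0 + 1) := by
  have hm := strictMono_of_deriv_pos hφ2
  have h1 : φ 1 = φ 0 + 1 := by simpa using hφ3 0
  rw [← h1]
  apply Subset.antisymm
  · rintro _ ⟨x, hx, rfl⟩
    exact ⟨hm hx.1, hm.monotone hx.2⟩
  · exact intermediate_value_Ioc zero_le_one hφ1.continuous.continuousOn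

lemma lper {f : ℝ → ℝ≥0∞} (hf : Function.Periodic f 1) (t : ℝ) :
    ∫⁻ x in Ioc t (t + 1), f x = ∫⁻ x in I01, f x := by
  haveI : VAddInvariantMeasure (AddSubgroup.zmultiples (1 : ℝ)) ℝ volume :=
    ⟨fun c s _ => measure_preimage_add _ _ _⟩
  rw [I01_restrict]
  have h := IsAddFundamentalDomain.setLIntegral_eq (G := AddSubgroup.zmultiples (1 : ℝ))
    (isAddFundamentalDomain_Ioc one_pos t) (isAddFundamentalDomain_Ioc one_pos 0) f
    hf.map_vadd_zmultiples
  simpa using h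

lemma rper {f : ℝ → ℝ} (hf : Function.Periodic f 1) (t : ℝ) :
    ∫ x in Ioc t (t + 1), f x = ∫ x in I01, f x := by
  haveI : VAddInvariantMeasure (AddSubgroup.zmultiples (1 : ℝ)) ℝ volume :=
    ⟨fun c s _ => measure_preimage_add _ _ _⟩
  rw [I01_restrict]
  have h := IsAddFundamentalDomain.setIntegral_eq (G := AddSubgroup.zmultiples (1 : ℝ))
    (isAddFundamentalDomain_Ioc one_pos t) (isAddFundamentalDomain_Ioc one_pos 0) (f := f)
    hf.map_vadd_zmultiples
  simpa using h

lemma lcov (hφ1 : ContDiff ℝ 1 φ) (hφ2 : ∀ x, 0 < deriv φ x)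
    (hφ3 : ∀ x, φ (x + 1) = φ x + 1) {f : ℝ → ℝ≥0∞} (hf : Function.Periodic f 1) :
    ∫⁻ x in I01, ENNReal.ofReal (deriv φ x) * f (φ x) = ∫⁻ x in I01, f x := by
  have hm := strictMono_of_deriv_pos hφ2
  have h := lintegral_image_eq_lintegral_abs_deriv_mul (s := Ioc 0 1) (f := φ) (f' := deriv φ)
    measurableSet_Ioc
    (fun x _ => ((hφ1.differentiable one_ne_zero x).hasDerivAt).hasDerivWithinAt)
    hm.injective.injOn f
  rw [image_Ioc hφ1 hφ2 hφ3, lper hf] at h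
  rw [h, I01_restrict]
  simp only [abs_of_pos (hφ2 _)]

lemma rcov (hφ1 : ContDiff ℝ 1 φ) (hφ2 : ∀ x, 0 < deriv φ x)
    (hφ3 : ∀ x, φ (x + 1) = φ x + 1) {f : ℝ → ℝ} (hf : Function.Periodic f 1) :
    ∫ x in I01, f (φ x) * deriv φ x = ∫ x in I01, f x := by
  have hm := strictMono_of_deriv_pos hφ2
  have h := integral_image_eq_integral_abs_deriv_smul (s := Ioc 0 1) (f := φ) (f' := deriv φ)
    measurableSet_Ioc
    (fun x _ => ((hφ1.differentiable one_ne_zero x).hasDerivAt).hasDerivWithinAt)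
    hm.injective.injOn f
  rw [image_Ioc hφ1 hφ2 hφ3, rper hf] at h
  rw [h, I01_restrict]
  simp only [abs_of_pos (hφ2 _), smul_eq_mul, mul_comm]

lemma lcov2 (hφ1 : ContDiff ℝ 1 φ) (hφ2 : ∀ x, 0 < deriv φ x)
    (hφ3 : ∀ x, φ (x + 1) = φ x + 1) {F : ℝ → ℝ → ℝ≥0∞} (h1 : ∀ x y, F (x + 1) y = F x y)
    (h2 : ∀ x y, F x (y + 1) = F x y) :
    ∫⁻ x in I01, ∫⁻ y in I01, ENNReal.ofReal (deriv φ x) * (ENNReal.ofReal (deriv φ y) *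
      F (φ x) (φ y)) = ∫⁻ x in I01, ∫⁻ y in I01, F x y := by
  have e : ∀ x, ∫⁻ y in I01, ENNReal.ofReal (deriv φ x) * (ENNReal.ofReal (deriv φ y) *
      F (φ x) (φ y)) = ENNReal.ofReal (deriv φ x) * (fun z => ∫⁻ y in I01, F z y) (φ x) := by
    intro x
    rw [lintegral_const_mul' _ _ ENNReal.ofReal_ne_top, lcov hφ1 hφ2 hφ3 (h2 (φ x))]
  simp_rw [e]
  exact lcov hφ1 hφ2 hφ3 (f := fun z => ∫⁻ y in I01, F z y) (fun x => by simp only [h1])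

lemma rcov2 (hφ1 : ContDiff ℝ 1 φ) (hφ2 : ∀ x, 0 < deriv φ x)
    (hφ3 : ∀ x, φ (x + 1) = φ x + 1) {F : ℝ → ℝ → ℝ} (h1 : ∀ x y, F (x + 1) y = F x y)
    (h2 : ∀ x y, F x (y + 1) = F x y) :
    ∫ x in I01, ∫ y in I01, F (φ x) (φ y) * (deriv φ x * deriv φ y)
      = ∫ x in I01, ∫ y in I01, F x y := by
  have e : ∀ x, ∫ y in I01, F (φ x) (φ y) * (deriv φ x * deriv φ y)
      = (fun z => ∫ y in I01, F z y) (φ x) * deriv φ x := by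
    intro x
    simp only
    rw [← rcov hφ1 hφ2 hφ3 (h2 (φ x)), ← integral_mul_const]
    congr 1; ext y; ring
  simp_rw [e]
  exact rcov hφ1 hφ2 hφ3 (f := fun z => ∫ y in I01, F z y) (fun x => by simp only [h1])

lemma phi_int (hφ3 : ∀ x, φ (x + 1) = φ x + 1) (x : ℝ) (k : ℤ) : φ (x + k) = φ x + k := by
  have hp : Function.Periodic (fun x => φ x - x) 1 := by intro x; simp only [hφ3]; ring
  have := per_int hp x k
  linarith

lemma dphi_per (hφ3 : ∀ x, φ (x + 1) = φ x + 1) : Function.Periodic (deriv φ) 1 := by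
  intro x
  have h : (fun y => φ (y + 1)) = fun y => φ y + 1 := funext hφ3
  rw [← deriv_comp_add_const, h, deriv_add_const]

lemma comp_per {E : Type*} {u : ℝ → E} (hφ3 : ∀ x, φ (x + 1) = φ x + 1)
    (hu : Function.Periodic u 1) : Function.Periodic (u ∘ φ) 1 := by
  intro x; simp only [Function.comp, hφ3, hu (φ x)]

lemma dcomp {n : ℕ} {u : ℝ → En n} (hφ1 : ContDiff ℝ 1 φ) (hu : ContDiff ℝ 1 u) (x : ℝ) :
    deriv (u ∘ φ) x = deriv φ x • deriv u (φ x) :=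
  deriv.scomp x (hu.differentiable one_ne_zero _) (hφ1.differentiable one_ne_zero _)

lemma dT_lip (hφ1 : ContDiff ℝ 1 φ) (hφ3 : ∀ x, φ (x + 1) = φ x + 1) {L : ℝ}
    (hL : ∀ x, ‖deriv φ x‖ ≤ L) (x y : ℝ) : dT (φ x) (φ y) ≤ L * dT x y := by
  have key : ∀ a b, ‖φ a - φ b‖ ≤ L * ‖a - b‖ := fun a b =>
    convex_univ.norm_image_sub_le_of_norm_deriv_le
      (fun x _ => hφ1.differentiable one_ne_zero x) (fun x _ => hL x) (mem_univ b) (mem_univ a)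
  rw [dT_eq x y]
  set k := round (x - y)
  have h := key x (y + k)
  rw [phi_int hφ3, Real.norm_eq_abs, Real.norm_eq_abs, ← sub_sub, ← sub_sub] at h
  exact (dT_le _ _ k).trans h

lemma gag_comp {n : ℕ} {s : ℝ} (hs : 0 < 2 * (s - 1) + 1) {γ : ℝ → En n}
    (hφ1 : ContDiff ℝ 1 φ) (hφ2 : ∀ x, 0 < deriv φ x)
    (hφ3 : ∀ x, φ (x + 1) = φ x + 1) (hφ4 : gagliardoSqE (s - 1) (deriv φ) < ⊤)
    (hγ : InHs s γ) : gagliardoSqE (s - 1) (deriv (γ ∘ φ)) < ⊤ := by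
  obtain ⟨hp, hc, hg⟩ := hγ
  have hcφ : Continuous (deriv φ) := hφ1.continuous_deriv le_rfl
  have hcγ : Continuous (deriv γ) := hc.continuous_deriv le_rfl
  have hpγ := deriv_periodic hp
  have hpφ := dphi_per hφ3
  obtain ⟨C, hC0, hC⟩ := bdd_of_periodic hcγ hpγ
  obtain ⟨L, hL0, hL⟩ := bdd_of_periodic hcφ hpφ
  obtain ⟨M, hM0, hM⟩ := bdd_of_periodic (f := fun x => (deriv φ x)⁻¹)
    (hcφ.inv₀ fun x => (hφ2 x).ne') (fun x => by simp only [hpφ x])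
  set q := 2 * (s - 1) + 1 with hq
  unfold gagliardoSqE at hφ4 hg ⊢
  rw [← hq] at *
  set A : ℝ → ℝ → ℝ≥0∞ := fun x y =>
    ENNReal.ofReal (‖deriv φ y - deriv φ x‖ ^ 2 / dT x y ^ q) with hA
  set B : ℝ → ℝ → ℝ≥0∞ := fun x y =>
    ENNReal.ofReal (‖deriv γ y - deriv γ x‖ ^ 2 / dT x y ^ q) with hB
  set K1 := 2 * C ^ 2
  set K2 := 2 * L ^ 2 * L ^ q * M ^ 2
  have hpt : ∀ x y, ENNReal.ofReal (‖deriv (γ ∘ φ) y - deriv (γ ∘ φ) x‖ ^ 2 / dT x y ^ q) ≤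
      ENNReal.ofReal K1 * A x y + ENNReal.ofReal K2 *
        (ENNReal.ofReal (deriv φ x) * (ENNReal.ofReal (deriv φ y) * B (φ x) (φ y))) := by
    intro x y
    simp only [hA, hB]
    have hqn : ∀ a b, 0 ≤ dT a b ^ q := fun a b => Real.rpow_nonneg (dT_nonneg _ _) _
    have hK1 : 0 ≤ K1 := by positivity
    have hK2 : 0 ≤ K2 := by positivity
    have n1 : 0 ≤ ‖deriv φ y - deriv φ x‖ ^ 2 / dT x y ^ q := div_nonneg (by positivity) (hqn _ _)
    have n2 : 0 ≤ ‖deriv γ (φ y) - deriv γ (φ x)‖ ^ 2 / dT (φ x) (φ y) ^ q :=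
      div_nonneg (by positivity) (hqn _ _)
    have px := hφ2 x
    have py := hφ2 y
    rw [← ENNReal.ofReal_mul py.le, ← ENNReal.ofReal_mul px.le, ← ENNReal.ofReal_mul hK2,
      ← ENNReal.ofReal_mul hK1, ← ENNReal.ofReal_add (by positivity) (by positivity)]
    apply ENNReal.ofReal_le_ofReal
    rw [dcomp hφ1 hc, dcomp hφ1 hc]
    set a := deriv γ (φ y)
    set b := deriv γ (φ x)
    have e : deriv φ y • a - deriv φ x • b = (deriv φ y - deriv φ x) • a + deriv φ x • (a - b) := by
      module
    have N : ‖deriv φ y • a - deriv φ x • b‖ ≤ ‖deriv φ y - deriv φ x‖ * C + L * ‖a - b‖ := by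
      rw [e]
      refine (norm_add_le _ _).trans ?_
      rw [norm_smul, norm_smul]
      gcongr
      · exact hC _
      · exact hL _
    have N2 : ‖deriv φ y • a - deriv φ x • b‖ ^ 2 ≤
        K1 * ‖deriv φ y - deriv φ x‖ ^ 2 + 2 * L ^ 2 * ‖a - b‖ ^ 2 := by
      have := pow_le_pow_left₀ (norm_nonneg _) N 2
      have h2 := sq_nonneg (‖deriv φ y - deriv φ x‖ * C - L * ‖a - b‖)
      simp only [K1]
      nlinarith
    have T2 : ‖a - b‖ ^ 2 / dT x y ^ q ≤ L ^ q * (‖a - b‖ ^ 2 / dT (φ x) (φ y) ^ q) := by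
      rcases eq_or_lt_of_le (dT_nonneg (φ x) (φ y)) with h0 | h0
      · have hab : a = b := by
          rw [dT_eq, eq_comm, abs_eq_zero] at h0
          have := per_int hpγ (φ y) (round (φ x - φ y))
          rw [← show φ x = φ y + (round (φ x - φ y) : ℤ) by linarith] at this
          exact this.symm
        simp [hab]
      · have hl := dT_lip hφ1 hφ3 hL x y
        have hd : 0 < dT x y := by
          by_contra hcon
          have : dT x y = 0 := le_antisymm (not_lt.mp hcon) (dT_nonneg _ _)
          rw [this, mul_zero] at hl
          linarith
        have hr := Real.rpow_le_rpow h0.le hl hs.le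
        rw [Real.mul_rpow hL0.le hd.le] at hr
        have p1 := Real.rpow_pos_of_pos h0 q
        have p2 := Real.rpow_pos_of_pos hd q
        rw [← mul_div_assoc, div_le_div_iff₀ p2 p1]
        have := mul_le_mul_of_nonneg_left hr (sq_nonneg ‖a - b‖)
        linarith
    have one : 1 ≤ M ^ 2 * (deriv φ x * deriv φ y) := by
      have f : ∀ z, 1 ≤ M * deriv φ z := by
        intro z
        have hz := hM z
        rw [Real.norm_of_nonneg (inv_nonneg.mpr (hφ2 z).le)] at hz
        have := mul_le_mul_of_nonneg_right hz (hφ2 z).le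
        rwa [inv_mul_cancel₀ (hφ2 z).ne'] at this
      have := mul_le_mul (f x) (f y) zero_le_one (by positivity)
      linarith
    have hLq : 0 < L ^ q := Real.rpow_pos_of_pos hL0 q
    calc _ ≤ (K1 * ‖deriv φ y - deriv φ x‖ ^ 2 + 2 * L ^ 2 * ‖a - b‖ ^ 2) / dT x y ^ q :=
          div_le_div_of_nonneg_right N2 (hqn _ _)
      _ = K1 * (‖deriv φ y - deriv φ x‖ ^ 2 / dT x y ^ q) +
          2 * L ^ 2 * (‖a - b‖ ^ 2 / dT x y ^ q) := by ring
      _ ≤ K1 * (‖deriv φ y - deriv φ x‖ ^ 2 / dT x y ^ q) +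
          2 * L ^ 2 * (L ^ q * (‖a - b‖ ^ 2 / dT (φ x) (φ y) ^ q)) * 1 := by
        rw [mul_one]; gcongr
      _ ≤ K1 * (‖deriv φ y - deriv φ x‖ ^ 2 / dT x y ^ q) +
          2 * L ^ 2 * (L ^ q * (‖a - b‖ ^ 2 / dT (φ x) (φ y) ^ q)) *
            (M ^ 2 * (deriv φ x * deriv φ y)) := by
        gcongr
      _ = _ := by simp only [K2]; ring
  have hAm : Measurable (fun p : ℝ × ℝ => ENNReal.ofReal K1 * A p.1 p.2) := by
    apply Measurable.const_mul
    apply Measurable.ennreal_ofReal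
    apply Measurable.div
    · exact (((hcφ.measurable.comp measurable_snd).sub
        (hcφ.measurable.comp measurable_fst)).norm).pow_const 2
    · exact dT_meas.pow_const q
  refine lt_of_le_of_lt (lintegral_mono fun x => lintegral_mono fun y => hpt x y) ?_
  have e1 : ∀ x, ∫⁻ y in I01, (ENNReal.ofReal K1 * A x y + ENNReal.ofReal K2 *
        (ENNReal.ofReal (deriv φ x) * (ENNReal.ofReal (deriv φ y) * B (φ x) (φ y)))) =
      (∫⁻ y in I01, ENNReal.ofReal K1 * A x y) + ∫⁻ y in I01, ENNReal.ofReal K2 *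
        (ENNReal.ofReal (deriv φ x) * (ENNReal.ofReal (deriv φ y) * B (φ x) (φ y))) := fun x =>
    lintegral_add_left (hAm.comp measurable_prodMk_left) _
  simp_rw [e1]
  rw [lintegral_add_left hAm.lintegral_prod_right']
  simp_rw [lintegral_const_mul' (ENNReal.ofReal K1) _ ENNReal.ofReal_ne_top,
    lintegral_const_mul' (ENNReal.ofReal K2) _ ENNReal.ofReal_ne_top]
  rw [lcov2 hφ1 hφ2 hφ3 (F := B) (fun x y => by simp only [hB, dT_add_left, hpγ x])
    (fun x y => by simp only [hB, dT_add_right, hpγ y])]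
  exact ENNReal.add_lt_top.mpr ⟨ENNReal.mul_lt_top ENNReal.ofReal_lt_top hφ4,
    ENNReal.mul_lt_top ENNReal.ofReal_lt_top hg⟩

lemma inj_comp {n : ℕ} {γ : ℝ → En n} (hφ2 : ∀ x, 0 < deriv φ x)
    (hφ3 : ∀ x, φ (x + 1) = φ x + 1) (hp : Function.Periodic γ 1) (hi : InjOn γ I01) :
    InjOn (γ ∘ φ) I01 := by
  have hm := strictMono_of_deriv_pos hφ2
  have h1 : φ 1 = φ 0 + 1 := by simpa using hφ3 0
  intro x hx y hy hxy
  have red : ∀ a, γ (Int.fract a) = γ a := fun a => by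
    have := per_int hp (Int.fract a) ⌊a⌋
    rwa [Int.fract_add_floor, eq_comm] at this
  have mem : ∀ a : ℝ, Int.fract a ∈ I01 := fun a => ⟨Int.fract_nonneg a, Int.fract_lt_one a⟩
  have hf : Int.fract (φ x) = Int.fract (φ y) :=
    hi (mem _) (mem _) (by rw [red, red]; exact hxy)
  obtain ⟨k, hk⟩ := Int.fract_eq_fract.mp hf
  have a1 := hm.monotone hx.1
  have a2 := hm hx.2
  have b1 := hm.monotone hy.1
  have b2 := hm hy.2
  have k1 : (k : ℝ) < 1 := by linarith
  have k2 : (-1 : ℝ) < k := by linarith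
  have k0 : k = 0 := by
    have : k < 1 := by exact_mod_cast k1
    have : -1 < k := by exact_mod_cast k2
    omega
  apply hm.injective
  rw [k0] at hk
  push_cast at hk
  linarith

variable {n : ℕ} {γ u v : ℝ → En n} {s : ℝ}

lemma Dg_comp (hφ1 : ContDiff ℝ 1 φ) (hφ2 : ∀ x, 0 < deriv φ x) (hγ : ContDiff ℝ 1 γ)
    (hu : ContDiff ℝ 1 u) (x : ℝ) : Dg (γ ∘ φ) (u ∘ φ) x = Dg γ u (φ x) := by
  have := (hφ2 x).ne'
  unfold Dg
  rw [dcomp hφ1 hγ, dcomp hφ1 hu, norm_smul, Real.norm_of_nonneg (hφ2 x).le, smul_smul]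
  congr 1
  rw [mul_inv, mul_comm, ← mul_assoc, mul_inv_cancel₀ this, one_mul]

lemma Rop_comp (hφ1 : ContDiff ℝ 1 φ) (hφ2 : ∀ x, 0 < deriv φ x) (hγ : ContDiff ℝ 1 γ)
    (hu : ContDiff ℝ 1 u) (x y : ℝ) :
    Rop s (γ ∘ φ) (u ∘ φ) x y = Rop s γ u (φ x) (φ y) := by
  have := (hφ2 x).ne'
  unfold Rop DDg
  rw [dcomp hφ1 hγ, dcomp hφ1 hu, norm_smul, Real.norm_of_nonneg (hφ2 x).le, smul_smul,
    real_inner_smul_left]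
  simp only [Function.comp]
  congr 3
  rw [mul_pow, mul_inv]
  field_simp

lemma muW_comp (hφ1 : ContDiff ℝ 1 φ) (hφ2 : ∀ x, 0 < deriv φ x) (hγ : ContDiff ℝ 1 γ)
    (x y : ℝ) : muW (γ ∘ φ) x y = muW γ (φ x) (φ y) * (deriv φ x * deriv φ y) := by
  unfold muW
  rw [dcomp hφ1 hγ, dcomp hφ1 hγ, norm_smul, norm_smul, Real.norm_of_nonneg (hφ2 x).le,
    Real.norm_of_nonneg (hφ2 y).le]
  simp only [Function.comp]
  ring

end cov

end S6

/-- reparameterization invariance of `G`: if `φ` is an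
orientation-preserving `C¹`-diffeomorphism of `𝕋` of class `H^s` (modelled by a lift
`φ : ℝ → ℝ` with `φ(x+1) = φ(x)+1`, `φ' > 0` and `[φ']_{H^{s-1}} < ∞`) and `γ ∈ 𝓜`,
then also `γ∘φ ∈ 𝓜` and `G_{γ∘φ}(u∘φ, v∘φ) = G_γ(u,v)` for all `u, v ∈ H^s(𝕋,ℝⁿ)`. -/
theorem statement6 (s : ℝ) (hs : s ∈ Set.Ioo (3 / 2 : ℝ) 2) (n : ℕ) (hn : 2 ≤ n)
    (φ : ℝ → ℝ) (hφ1 : ContDiff ℝ 1 φ) (hφ2 : ∀ x, 0 < deriv φ x)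
    (hφ3 : ∀ x, φ (x + 1) = φ x + 1) (hφ4 : gagliardoSqE (s - 1) (deriv φ) < ⊤)
    (γ : ℝ → En n) (hγ : InM s γ) :
    InM s (γ ∘ φ) ∧
      ∀ u v : ℝ → En n, InHs s u → InHs s v →
        Gmet s (γ ∘ φ) (u ∘ φ) (v ∘ φ) = Gmet s γ u v := by
  obtain ⟨hγs, hinj, hne⟩ := hγ
  have hγs' := hγs
  obtain ⟨hp, hc, hg⟩ := hγs'
  have hpd := S6.deriv_periodic hp
  refine ⟨⟨⟨S6.comp_per hφ3 hp, hc.comp hφ1, S6.gag_comp (by linarith [hs.1]) hφ1 hφ2 hφ3 hφ4 hγs⟩,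
    S6.inj_comp hφ2 hφ3 hp hinj, fun x => ?_⟩, ?_⟩
  · rw [S6.dcomp hφ1 hc]
    exact smul_ne_zero (hφ2 x).ne' (hne _)
  · rintro u v ⟨hup, huc, -⟩ ⟨hvp, hvc, -⟩
    have hupd := S6.deriv_periodic hup
    have hvpd := S6.deriv_periodic hvp
    have e1 : B1 s (γ ∘ φ) (u ∘ φ) (v ∘ φ) = B1 s γ u v := by
      unfold B1
      simp_rw [S6.Rop_comp hφ1 hφ2 hc huc, S6.Rop_comp hφ1 hφ2 hc hvc, S6.muW_comp hφ1 hφ2 hc,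
        ← mul_assoc]
      simp_rw [mul_assoc _ (deriv φ _) (deriv φ _)]
      refine S6.rcov2 hφ1 hφ2 hφ3
        (F := fun x y => ⟪Rop s γ u x y, Rop s γ v x y⟫ * muW γ x y) ?_ ?_ <;> intro x y
      · simp only [Rop, DDg, muW, hp x, hpd x, hup x, hupd x, hvp x, hvpd x]
      · simp only [Rop, DDg, muW, hp y, hpd y, hup y, hupd y, hvp y, hvpd y]
    have e2 : B2 s (γ ∘ φ) (u ∘ φ) (v ∘ φ) = B2 s γ u v := by
      unfold B2
      simp_rw [S6.Rop_comp hφ1 hφ2 hc hc, S6.muW_comp hφ1 hφ2 hc, ← mul_assoc]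
      simp_rw [mul_assoc _ (deriv φ _) (deriv φ _)]
      refine S6.rcov2 hφ1 hφ2 hφ3
        (F := fun x y => ‖Rop s γ γ x y‖ ^ 2 * (⟪u y - u x, v y - v x⟫ / ‖γ y - γ x‖ ^ 2)
          * muW γ x y) ?_ ?_ <;> intro x y
      · simp only [Rop, DDg, muW, hp x, hpd x, hup x, hupd x, hvp x, hvpd x]
      · simp only [Rop, DDg, muW, hp y, hpd y, hup y, hupd y, hvp y, hvpd y]
    have e3 : B3 s (γ ∘ φ) (u ∘ φ) (v ∘ φ) = B3 s γ u v := by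
      unfold B3
      simp_rw [S6.Rop_comp hφ1 hφ2 hc hc, S6.muW_comp hφ1 hφ2 hc, S6.Dg_comp hφ1 hφ2 hc huc,
        S6.Dg_comp hφ1 hφ2 hc hvc, ← mul_assoc]
      simp_rw [mul_assoc _ (deriv φ _) (deriv φ _)]
      refine S6.rcov2 hφ1 hφ2 hφ3
        (F := fun x y => ‖Rop s γ γ x y‖ ^ 2 *
          (⟪Dg γ u x, Dg γ v x⟫ + ⟪Dg γ u y, Dg γ v y⟫) * muW γ x y) ?_ ?_ <;> intro x y
      · simp only [Rop, DDg, Dg, muW, hp x, hpd x, hup x, hupd x, hvp x, hvpd x]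
      · simp only [Rop, DDg, Dg, muW, hp y, hpd y, hup y, hupd y, hvp y, hvpd y]
    have hn' : ∀ x, ‖deriv (γ ∘ φ) x‖ = ‖deriv γ (φ x)‖ * deriv φ x := fun x => by
      rw [S6.dcomp hφ1 hc, norm_smul, Real.norm_of_nonneg (hφ2 x).le, mul_comm]
    have e4 : innerH1g (γ ∘ φ) (u ∘ φ) (v ∘ φ) = innerH1g γ u v := by
      unfold innerH1g
      simp_rw [S6.Dg_comp hφ1 hφ2 hc huc, S6.Dg_comp hφ1 hφ2 hc hvc, hn', ← mul_assoc]
      refine S6.rcov hφ1 hφ2 hφ3 (f := fun x => ⟪Dg γ u x, Dg γ v x⟫ * ‖deriv γ x‖) ?_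
      intro x
      simp only [Dg, hpd x, hupd x, hvpd x]
    have e5 : innerL2g (γ ∘ φ) (u ∘ φ) (v ∘ φ) = innerL2g γ u v := by
      unfold innerL2g
      simp_rw [hn', ← mul_assoc]
      refine S6.rcov hφ1 hφ2 hφ3 (f := fun x => ⟪u x, v x⟫ * ‖deriv γ x‖) ?_
      intro x
      simp only [hpd x, hup x, hvp x]
    unfold Gmet
    rw [e1, e2, e3, e4, e5]
end
end
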